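/- Let M ≥ 0, suppose b : [−1,0] × B_1^0 → ℝ^n satisfies sup_{t∈[−1,0]} ‖b(t,·)‖_{C^{1−2s}(B_1^0)} ≤ M, suppose f : [−1,0] × B_1^0 → ℝ is bounded with sup |f| = F, and let u be a bounded classical solution of the extended drift–diffusion equation with drift b and right-hand side f. Then there exist α ∈ (0,1) and C > 0, both depending only on s, n and M, such that ‖u‖_{C^α([−1/2,0]×B_{1/2}^0)} + sup_{t∈[−1/2,0]} ‖u(t,·,·)‖_{C^α(B_{1/2}^+)} ≤ C ( sup_{[−1,0]×B_1^+} |u| + F ). -/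

import Mathlib

open Set Filter Topology MeasureTheory
open scoped RealInnerProductSpace

noncomputable section

abbrev En (n : ℕ) := EuclideanSpace ℝ (Fin n)

/-- The open upper half ball `B_r^+`. -/
def halfBall (n : ℕ) (r : ℝ) : Set (En n × ℝ) :=
  {p | ‖p.1‖ ^ 2 + p.2 ^ 2 < r ^ 2 ∧ 0 < p.2}

/-- The closure of the upper half ball. -/
def closedHalfBall (n : ℕ) (r : ℝ) : Set (En n × ℝ) :=
  {p | ‖p.1‖ ^ 2 + p.2 ^ 2 ≤ r ^ 2 ∧ 0 ≤ p.2}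

/-- `B_r^+ ∪ B_r^0`. -/
def halfBallWithBase (n : ℕ) (r : ℝ) : Set (En n × ℝ) :=
  {p | ‖p.1‖ ^ 2 + p.2 ^ 2 < r ^ 2 ∧ 0 ≤ p.2}

/-- The flat ball `B_r^0` in `ℝⁿ`. -/
def flatBall (n : ℕ) (r : ℝ) : Set (En n) := {x | ‖x‖ < r}

/-- `(∂B_1)^+`. -/
def spherePlus (n : ℕ) : Set (En n × ℝ) := {p | ‖p.1‖ ^ 2 + p.2 ^ 2 = 1 ∧ 0 < p.2}

/-- closure of `(∂B_1)^+`. -/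
def closedSpherePlus (n : ℕ) : Set (En n × ℝ) := {p | ‖p.1‖ ^ 2 + p.2 ^ 2 = 1 ∧ 0 ≤ p.2}

/-- Second directional derivative of `u` at `p` in direction `v`. -/
def D2 {n : ℕ} (u : En n × ℝ → ℝ) (p v : En n × ℝ) : ℝ :=
  fderiv ℝ (fun q => fderiv ℝ u q v) p v

/-- The Laplacian in the `n+1` variables `(x, y)`. -/
def lap {n : ℕ} (u : En n × ℝ → ℝ) (p : En n × ℝ) : ℝ :=
  (∑ i : Fin n, D2 u p (EuclideanSpace.single i 1, 0)) + D2 u p (0, 1)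

/-- `u` is `a`-harmonic on `Ω`: it is `C²` there and `Δu + (a/y) ∂_y u = 0`. -/
def IsAHarmonicOn {n : ℕ} (a : ℝ) (u : En n × ℝ → ℝ) (Ω : Set (En n × ℝ)) : Prop :=
  ContDiffOn ℝ 2 u Ω ∧ ∀ p ∈ Ω, lap u p + (a / p.2) * fderiv ℝ u p (0, 1) = 0

/-- `lim_{y → 0⁺} y^a ∂_y w(x, y) = L`. -/
def NormalDerivLimit {n : ℕ} (a : ℝ) (w : En n × ℝ → ℝ) (x : En n) (L : ℝ) : Prop :=
  Tendsto (fun y : ℝ => y ^ a * fderiv ℝ w (x, y) (0, 1)) (𝓝[>] (0 : ℝ)) (𝓝 L)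

/-- The boundary-restriction `(t, x) ↦ u(t, x, 0)`. -/
def bdryFun {n : ℕ} (u : ℝ → En n × ℝ → ℝ) : ℝ × En n → ℝ := fun q => u q.1 (q.2, 0)

/-- A classical solution of the extended drift–diffusion equation on
`[-1,0] × closure (B_1^+)` with drift `b` and right-hand side `f`. -/
def IsExtDDSolution {n : ℕ} (a : ℝ) (b : ℝ → En n → En n) (f : ℝ → En n → ℝ)
    (u : ℝ → En n × ℝ → ℝ) : Prop :=
  ContinuousOn (fun q : ℝ × (En n × ℝ) => u q.1 q.2) (Icc (-1 : ℝ) 0 ×ˢ closedHalfBall n 1) ∧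
  (∀ t ∈ Icc (-1 : ℝ) 0, IsAHarmonicOn a (u t) (halfBall n 1)) ∧
  (∀ q ∈ Ioc (-1 : ℝ) 0 ×ˢ flatBall n 1,
      DifferentiableWithinAt ℝ (bdryFun u) (Ioc (-1 : ℝ) 0 ×ˢ flatBall n 1) q) ∧
  (∀ t x, (t, x) ∈ Ioc (-1 : ℝ) 0 ×ˢ flatBall n 1 →
      ∃ L : ℝ, NormalDerivLimit a (u t) x L ∧
        fderivWithin ℝ (bdryFun u) (Ioc (-1 : ℝ) 0 ×ˢ flatBall n 1) (t, x) (1, 0) +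
          fderivWithin ℝ (bdryFun u) (Ioc (-1 : ℝ) 0 ×ˢ flatBall n 1) (t, x) (0, b t x) -
          L = f t x)

/-- A classical solution of the localized fractional heat equation on
`[-1,0] × closure (B_1^+)`. -/
def IsFracHeatSolution {n : ℕ} (a : ℝ) (u : ℝ → En n × ℝ → ℝ) : Prop :=
  ContinuousOn (fun q : ℝ × (En n × ℝ) => u q.1 q.2) (Icc (-1 : ℝ) 0 ×ˢ closedHalfBall n 1) ∧
  (∀ t ∈ Icc (-1 : ℝ) 0, IsAHarmonicOn a (u t) (halfBall n 1)) ∧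
  (∀ t ∈ Ioc (-1 : ℝ) 0, ∀ x ∈ flatBall n 1,
      DifferentiableWithinAt ℝ (fun τ => u τ (x, 0)) (Ioc (-1 : ℝ) 0) t ∧
      NormalDerivLimit a (u t) x (derivWithin (fun τ => u τ (x, 0)) (Ioc (-1 : ℝ) 0) t))

/-!
After division by a bound for `|u|` and `|f|`, the estimate is a chain of maximum principle
arguments for a solution and right-hand side of size one.

*Horizontal increments.* Double the variable `x` and compare `u (t, x, y) - u (t, x', y)` with a
multiple of `z ^ α (5 - τ)`, where `z = |x - x'| / 2` and `τ` is homogeneous of degree zero in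
`(z, y)`. At an interior maximum, coupling the second derivatives at `x` and `x'` by reflection in
the hyperplane orthogonal to `x - x'` leaves only the second derivatives of the profile, which is a
strict supersolution. At a maximum with `y = 0`, differentiating backwards along the characteristics
through `x` and `x'` produces `(b t x - b t x') · ∇`, of order `z ^ (α - 1) z ^ (1 - 2s)`. This is
exactly the order of the conormal derivative of the profile, which therefore dominates the drift
when `α` is small: the Hölder exponent `1 - 2s` of `b` is the critical one.

*Increments in time and height over the base.* The horizontal estimate at time `t₁` gives
`u (t₁, x, 0) ≤ u (t₁, x₀, 0) + C (ε ^ α + |x - x₀| ^ 2 / ε ^ 2)` for every `ε > 0`. This bound is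
propagated by an explicit supersolution which grows like `t - t₁` and `y ^ (2s)`; then `ε` is
optimized.

*Vertical increments.* Doubling the variable `y` with modulus `N (y - y') ^ β`, the previous step
excludes a maximum with `y' = 0`, and concavity of the modulus excludes an interior one.
-/
/-! ### Second derivatives and maxima of functions of one variable -/

/-- `g` is differentiable near `x` and twice differentiable at `x`, with first and second
derivatives `g₁` and `g₂` at `x`. -/
def HasSecondDerivAt (g : ℝ → ℝ) (g₁ g₂ x : ℝ) : Prop :=
  ∃ g' : ℝ → ℝ, (∀ᶠ t in 𝓝 x, HasDerivAt g (g' t) t) ∧ g' x = g₁ ∧ HasDerivAt g' g₂ x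

namespace HasSecondDerivAt

variable {f g : ℝ → ℝ} {f₁ f₂ g₁ g₂ x : ℝ}

lemma congr_derivs {g₁' g₂' : ℝ} (hg : HasSecondDerivAt g g₁ g₂ x) (h₁ : g₁ = g₁')
    (h₂ : g₂ = g₂') : HasSecondDerivAt g g₁' g₂' x :=
  h₁ ▸ h₂ ▸ hg

lemma congr_of_eventuallyEq (hg : HasSecondDerivAt g g₁ g₂ x) (h : f =ᶠ[𝓝 x] g) :
    HasSecondDerivAt f g₁ g₂ x := by
  obtain ⟨g', hg', h₁, h₂⟩ := hg
  refine ⟨g', ?_, h₁, h₂⟩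
  filter_upwards [hg', h.eventually_nhds] with t ht hft using ht.congr_of_eventuallyEq hft

lemma add (hf : HasSecondDerivAt f f₁ f₂ x) (hg : HasSecondDerivAt g g₁ g₂ x) :
    HasSecondDerivAt (fun t => f t + g t) (f₁ + g₁) (f₂ + g₂) x := by
  obtain ⟨f', hf', rfl, hf₂⟩ := hf
  obtain ⟨g', hg', rfl, hg₂⟩ := hg
  exact ⟨_, by filter_upwards [hf', hg'] with t h h' using h.fun_add h', rfl, hf₂.fun_add hg₂⟩

lemma const_mul (c : ℝ) (hg : HasSecondDerivAt g g₁ g₂ x) :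
    HasSecondDerivAt (fun t => c * g t) (c * g₁) (c * g₂) x := by
  obtain ⟨g', hg', rfl, hg₂⟩ := hg
  exact ⟨_, hg'.mono fun t h => h.const_mul c, rfl, hg₂.const_mul c⟩

lemma sub (hf : HasSecondDerivAt f f₁ f₂ x) (hg : HasSecondDerivAt g g₁ g₂ x) :
    HasSecondDerivAt (fun t => f t - g t) (f₁ - g₁) (f₂ - g₂) x := by
  convert hf.add (hg.const_mul (-1)) using 1 <;> first | (funext t; ring) | ring

lemma mul (hf : HasSecondDerivAt f f₁ f₂ x) (hg : HasSecondDerivAt g g₁ g₂ x) :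
    HasSecondDerivAt (fun t => f t * g t) (f₁ * g x + f x * g₁)
      (f₂ * g x + 2 * (f₁ * g₁) + f x * g₂) x := by
  obtain ⟨f', hf', rfl, hf₂⟩ := hf
  obtain ⟨g', hg', rfl, hg₂⟩ := hg
  refine ⟨fun t => f' t * g t + f t * g' t, ?_, rfl, ?_⟩
  · filter_upwards [hf', hg'] with t h h' using h.fun_mul h'
  · exact ((hf₂.fun_mul hg'.self_of_nhds).fun_add (hf'.self_of_nhds.fun_mul hg₂)).congr_deriv
      (by ring)

lemma comp_affine (c : ℝ) (hg : HasSecondDerivAt g g₁ g₂ x) :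
    HasSecondDerivAt (fun σ => g (x + σ * c)) (g₁ * c) (g₂ * c ^ 2) 0 := by
  obtain ⟨g', hg', rfl, hg₂⟩ := hg
  have hline (σ : ℝ) : HasDerivAt (fun σ => x + σ * c) c σ := by
    simpa using ((hasDerivAt_id σ).mul_const c).const_add x
  have hlim : Tendsto (fun σ => x + σ * c) (𝓝 0) (𝓝 x) := by
    simpa using (hline 0).continuousAt.tendsto
  refine ⟨fun σ => g' (x + σ * c) * c, ?_, by simp, ?_⟩
  · exact (hlim.eventually hg').mono fun σ h => h.comp σ (hline σ)
  · exact ((HasDerivAt.comp (0 : ℝ) (by simpa using hg₂) (hline 0)).mul_const c).congr_deriv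
      (by ring)

lemma isLocalMax (hg : HasSecondDerivAt g g₁ g₂ x) (hmax : IsLocalMax g x) :
    g₁ = 0 ∧ g₂ ≤ 0 := by
  obtain ⟨g', hg', rfl, hg₂⟩ := hg
  have hderiv : deriv g =ᶠ[𝓝 x] g' := hg'.mono fun t h => h.deriv
  have hzero : deriv g x = 0 := hmax.deriv_eq_zero
  refine ⟨hderiv.self_of_nhds ▸ hzero, not_lt.1 fun hpos => ?_⟩
  have hsecond : deriv (deriv g) x = g₂ := hderiv.deriv_eq.trans hg₂.deriv
  have hmin := isLocalMin_of_deriv_deriv_pos (hsecond ▸ hpos) hzero hg'.self_of_nhds.continuousAt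
  have hconst : g =ᶠ[𝓝 x] fun _ => g x := by
    filter_upwards [hmax, hmin] with t h h' using le_antisymm h h'
  have : deriv (deriv g) x = 0 := by simpa using hconst.deriv.deriv_eq
  exact hpos.ne' (hsecond ▸ this)

end HasSecondDerivAt

lemma hasSecondDerivAt_id (x : ℝ) : HasSecondDerivAt (fun t => t) 1 0 x :=
  ⟨fun _ => 1, .of_forall hasDerivAt_id', rfl, hasDerivAt_const x 1⟩

lemma hasSecondDerivAt_const (c x : ℝ) : HasSecondDerivAt (fun _ => c) 0 0 x :=
  ⟨fun _ => 0, .of_forall fun t => hasDerivAt_const t c, rfl, hasDerivAt_const x 0⟩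

lemma hasSecondDerivAt_sub_sq (c x : ℝ) :
    HasSecondDerivAt (fun t => (t - c) ^ 2) (2 * (x - c)) 2 x := by
  have h := (hasSecondDerivAt_id x).sub (hasSecondDerivAt_const c x)
  simpa [pow_two, two_mul] using h.mul h

lemma hasSecondDerivAt_rpow (p : ℝ) {x : ℝ} (hx : 0 < x) :
    HasSecondDerivAt (fun t => t ^ p) (p * x ^ (p - 1)) (p * (p - 1) * x ^ (p - 2)) x := by
  refine ⟨fun t => p * t ^ (p - 1), ?_, rfl, ?_⟩
  · filter_upwards [lt_mem_nhds hx] with t ht using Real.hasDerivAt_rpow_const (.inl ht.ne')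
  · exact ((Real.hasDerivAt_rpow_const (.inl hx.ne')).const_mul p).congr_deriv (by ring_nf)

lemma hasSecondDerivAt_norm_add_smul_sq {E : Type*} [NormedAddCommGroup E]
    [InnerProductSpace ℝ E] (c v : E) :
    HasSecondDerivAt (fun σ : ℝ => ‖c + σ • v‖ ^ 2) (2 * ⟪c, v⟫) (2 * ‖v‖ ^ 2) 0 := by
  have hexpand : (fun σ : ℝ => ‖c + σ • v‖ ^ 2) =
      fun σ => ‖c‖ ^ 2 + (2 * ⟪c, v⟫ * σ + ‖v‖ ^ 2 * (σ - 0) ^ 2) := by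
    funext σ
    rw [norm_add_sq_real, norm_smul, inner_smul_right, mul_pow, Real.norm_eq_abs, sq_abs]
    ring
  rw [hexpand]
  exact ((hasSecondDerivAt_const _ 0).add (((hasSecondDerivAt_id 0).const_mul _).add
    ((hasSecondDerivAt_sub_sq 0 0).const_mul _))).congr_derivs (by ring) (by ring)

lemma hasSecondDerivAt_comp_line {n : ℕ} {w : En n × ℝ → ℝ} {p : En n × ℝ}
    (hw : ContDiffAt ℝ 2 w p) (v : En n × ℝ) :
    HasSecondDerivAt (fun σ : ℝ => w (p + σ • v)) (fderiv ℝ w p v) (D2 w p v) 0 := by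
  have hline (σ : ℝ) : HasDerivAt (fun σ : ℝ => p + σ • v) v σ := by
    simpa using ((hasDerivAt_id σ).smul_const v).const_add p
  have hlim : Tendsto (fun σ : ℝ => p + σ • v) (𝓝 0) (𝓝 p) := by
    simpa using (hline 0).continuousAt.tendsto
  refine ⟨fun σ => fderiv ℝ w (p + σ • v) v, ?_, by simp, ?_⟩
  · filter_upwards [hlim.eventually (hw.eventually (by simp))] with σ hσ
    exact (hσ.differentiableAt (by norm_num)).hasFDerivAt.comp_hasDerivAt σ (hline σ)
  · have hderiv : ContDiffAt ℝ 1 (fderiv ℝ w) p := hw.fderiv_right (by norm_num)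
    have hdiff : DifferentiableAt ℝ (fun q => fderiv ℝ w q v) p :=
      (hderiv.differentiableAt (by norm_num)).clm_apply (differentiableAt_const v)
    exact HasFDerivAt.comp_hasDerivAt (0 : ℝ) (by simpa using hdiff.hasFDerivAt) (hline 0)

lemma nonneg_of_hasDerivWithinAt_of_isLocalMaxOn_Iic {g : ℝ → ℝ} {c x : ℝ}
    (hg : HasDerivWithinAt g c (Iic x) x) (hmax : IsLocalMaxOn g (Iic x) x) : 0 ≤ c := by
  have h := hg.mono Iio_subset_Iic_self
  rw [hasDerivWithinAt_iff_tendsto_slope' self_notMem_Iio] at h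
  refine ge_of_tendsto h ?_
  filter_upwards [nhdsWithin_mono x Iio_subset_Iic_self hmax, self_mem_nhdsWithin] with t hle ht
  rw [slope_def_field]
  exact div_nonneg_of_nonpos (sub_nonpos.2 hle) (sub_nonpos.2 (le_of_lt ht))

/-! ### Conormal derivatives -/

lemma tendsto_sub_div_rpow_of_tendsto_conormal {σ Λ : ℝ} (hσ : 0 < σ) {D D' : ℝ → ℝ}
    (hcont : Tendsto D (𝓝[>] 0) (𝓝 (D 0)))
    (hderiv : ∀ᶠ y in 𝓝[>] (0 : ℝ), HasDerivAt D (D' y) y)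
    (hlim : Tendsto (fun y => y ^ (1 - σ) * D' y) (𝓝[>] 0) (𝓝 Λ)) :
    Tendsto (fun y => (D y - D 0) / y ^ σ) (𝓝[>] 0) (𝓝 (Λ / σ)) := by
  have hpos : ∀ᶠ y : ℝ in 𝓝[>] 0, 0 < y := self_mem_nhdsWithin
  have hrpow : Tendsto (fun y : ℝ => y ^ σ) (𝓝[>] 0) (𝓝 0) := by
    simpa [Real.zero_rpow hσ.ne'] using
      ((Real.continuousAt_rpow_const 0 σ (.inr hσ.le)).tendsto.mono_left nhdsWithin_le_nhds)
  refine HasDerivAt.lhopital_zero_nhdsGT (f' := D') (g' := fun y => σ * y ^ (σ - 1))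
    (hderiv.mono fun y hy => hy.sub_const _)
    (hpos.mono fun y hy => Real.hasDerivAt_rpow_const (.inl hy.ne'))
    (hpos.mono fun y hy => by positivity) (by simpa using hcont.sub_const (D 0)) hrpow
    ((hlim.div_const σ).congr' (hpos.mono fun y hy => ?_))
  have hinv : y ^ (1 - σ) = (y ^ (σ - 1))⁻¹ := by rw [← Real.rpow_neg hy.le, neg_sub]
  rw [hinv]
  field_simp

lemma conormal_limit_le {σ Λ γ : ℝ} (hσ : 0 < σ) {D D' G : ℝ → ℝ}
    (hcont : Tendsto D (𝓝[>] 0) (𝓝 (D 0)))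
    (hderiv : ∀ᶠ y in 𝓝[>] (0 : ℝ), HasDerivAt D (D' y) y)
    (hlim : Tendsto (fun y => y ^ (1 - σ) * D' y) (𝓝[>] 0) (𝓝 Λ))
    (hle : ∀ᶠ y in 𝓝[>] (0 : ℝ), D y - D 0 ≤ y ^ σ * G y)
    (hG : Tendsto G (𝓝[>] 0) (𝓝 γ)) : Λ ≤ σ * γ := by
  rw [← div_le_iff₀' hσ]
  refine le_of_tendsto_of_tendsto (tendsto_sub_div_rpow_of_tendsto_conormal hσ hcont hderiv hlim)
    hG ?_
  filter_upwards [hle, self_mem_nhdsWithin] with y hy (hpos : 0 < y)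
  rwa [div_le_iff₀' (by positivity)]

/-! ### The barrier -/

/-- In polar coordinates `z = r cos θ`, `y = r sin θ` this is `tan (θ / 2) ^ (2s)`: a function
with values in `[0, 1]` on the quarter plane whose conormal derivative at `y = 0` is
`2s (2z) ^ (-2s)`, the order of magnitude of the drift term. -/
def corrector (s z y : ℝ) : ℝ := (y / (z + √(z ^ 2 + y ^ 2))) ^ (2 * s)

/-- The profile `z ^ α (5 - tan (θ / 2) ^ (2s))` which controls `u (t, x, y) - u (t, x', y)` at
`z = |x - x'| / 2`. -/
def barrier (s α z y : ℝ) : ℝ := z ^ α * (5 - corrector s z y)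

section Barrier

variable {s α z y : ℝ}

lemma corrector_nonneg (hz : 0 ≤ z) (hy : 0 ≤ y) : 0 ≤ corrector s z y := by
  unfold corrector
  positivity

lemma corrector_le_one (hs : 0 ≤ s) (hz : 0 ≤ z) (hy : 0 ≤ y) : corrector s z y ≤ 1 := by
  have : y ≤ √(z ^ 2 + y ^ 2) := Real.le_sqrt_of_sq_le (by nlinarith [sq_nonneg z])
  exact Real.rpow_le_one (by positivity)
    (div_le_one_of_le₀ (by linarith) (by positivity)) (by positivity)

lemma div_sqrt_sq_add_sq_le_one (z y : ℝ) : z / √(z ^ 2 + y ^ 2) ≤ 1 :=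
  div_le_one_of_le₀ (Real.le_sqrt_of_sq_le (by nlinarith)) (Real.sqrt_nonneg _)

lemma hasDerivAt_sqrt_add_sq (z : ℝ) (hy : 0 < y) :
    HasDerivAt (fun z => √(z ^ 2 + y ^ 2)) (z / √(z ^ 2 + y ^ 2)) z := by
  refine ((((hasDerivAt_pow 2 z).add_const (y ^ 2))).sqrt (by positivity)).congr_deriv ?_
  simp only [Nat.cast_ofNat, Nat.add_one_sub_one, pow_one]
  field_simp

lemma hasDerivAt_sqrt_sq_add (z : ℝ) (hy : 0 < y) :
    HasDerivAt (fun y => √(z ^ 2 + y ^ 2)) (y / √(z ^ 2 + y ^ 2)) y := by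
  refine ((((hasDerivAt_pow 2 y).const_add (z ^ 2))).sqrt (by positivity)).congr_deriv ?_
  simp only [Nat.cast_ofNat, Nat.add_one_sub_one, pow_one]
  field_simp

lemma hasDerivAt_corrector_left (hz : 0 < z) (hy : 0 < y) :
    HasDerivAt (fun z => corrector s z y) (-(2 * s) * corrector s z y / √(z ^ 2 + y ^ 2)) z := by
  have hbase : 0 < y / (z + √(z ^ 2 + y ^ 2)) := by positivity
  have hquot : HasDerivAt (fun z => y / (z + √(z ^ 2 + y ^ 2)))
      (-(y / (z + √(z ^ 2 + y ^ 2))) / √(z ^ 2 + y ^ 2)) z := by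
    refine ((hasDerivAt_const z y).fun_div
      ((hasDerivAt_id' z).fun_add (hasDerivAt_sqrt_add_sq z hy)) (by positivity)).congr_deriv ?_
    field_simp
    ring
  refine (hquot.rpow_const (p := 2 * s) (.inl hbase.ne')).congr_deriv ?_
  rw [Real.rpow_sub_one hbase.ne', corrector]
  field_simp

lemma hasDerivAt_corrector_right (hz : 0 < z) (hy : 0 < y) :
    HasDerivAt (fun y => corrector s z y)
      (2 * s * corrector s z y * (z / (√(z ^ 2 + y ^ 2) * y))) y := by
  have hbase : 0 < y / (z + √(z ^ 2 + y ^ 2)) := by positivity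
  have hquot : HasDerivAt (fun y => y / (z + √(z ^ 2 + y ^ 2)))
      (y / (z + √(z ^ 2 + y ^ 2)) * (z / (√(z ^ 2 + y ^ 2) * y))) y := by
    have hdenom : z + √(z ^ 2 + y ^ 2) ≠ 0 := by positivity
    refine ((hasDerivAt_id' y).fun_div
      ((hasDerivAt_const y z).fun_add (hasDerivAt_sqrt_sq_add z hy)) hdenom).congr_deriv ?_
    field_simp
    linear_combination Real.sq_sqrt (add_nonneg (sq_nonneg z) (sq_nonneg y))
  refine (hquot.rpow_const (p := 2 * s) (.inl hbase.ne')).congr_deriv ?_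
  rw [Real.rpow_sub_one hbase.ne', corrector]
  field_simp

lemma hasSecondDerivAt_corrector_left (hz : 0 < z) (hy : 0 < y) :
    HasSecondDerivAt (fun z => corrector s z y) (-(2 * s) * corrector s z y / √(z ^ 2 + y ^ 2))
      ((4 * s ^ 2 / √(z ^ 2 + y ^ 2) ^ 2 + 2 * s * z / √(z ^ 2 + y ^ 2) ^ 3) *
        corrector s z y) z := by
  have hr : 0 < √(z ^ 2 + y ^ 2) := by positivity
  refine ⟨_, (lt_mem_nhds hz).mono fun w hw => hasDerivAt_corrector_left hw hy, rfl, ?_⟩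
  refine (((hasDerivAt_corrector_left hz hy).const_mul (-(2 * s))).fun_div
    (hasDerivAt_sqrt_add_sq z hy) hr.ne').congr_deriv ?_
  field_simp
  ring

lemma hasSecondDerivAt_corrector_right (hz : 0 < z) (hy : 0 < y) :
    HasSecondDerivAt (fun y => corrector s z y)
      (2 * s * corrector s z y * (z / (√(z ^ 2 + y ^ 2) * y)))
      ((4 * s ^ 2 * z ^ 2 / (√(z ^ 2 + y ^ 2) ^ 2 * y ^ 2) -
        2 * s * (z / (√(z ^ 2 + y ^ 2) * y ^ 2) + z / √(z ^ 2 + y ^ 2) ^ 3)) *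
          corrector s z y) y := by
  refine ⟨_, (lt_mem_nhds hy).mono fun w hw => hasDerivAt_corrector_right hz hw, rfl, ?_⟩
  refine (((hasDerivAt_corrector_right hz hy).const_mul (2 * s)).fun_mul
    ((hasDerivAt_const y z).fun_div
      ((hasDerivAt_sqrt_sq_add z hy).fun_mul (hasDerivAt_id' y)) (by positivity))).congr_deriv ?_
  field_simp
  ring

lemma corrector_equation (s : ℝ) {r : ℝ} (hr : 0 < r) (hy : 0 < y)
    (hpolar : r ^ 2 = z ^ 2 + y ^ 2) :
    (4 * s ^ 2 / r ^ 2 + 2 * s * z / r ^ 3) +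
      (4 * s ^ 2 * z ^ 2 / (r ^ 2 * y ^ 2) - 2 * s * (z / (r * y ^ 2) + z / r ^ 3)) +
        (1 - 2 * s) / y * (2 * s * (z / (r * y))) = 4 * s ^ 2 * (1 - z / r) / y ^ 2 := by
  field_simp
  linear_combination (-4 * s ^ 2 * r) * hpolar

lemma corrector_supersolution (hz : 0 < z) (hy : 0 < y) :
    ∃ c₂ g₁ g₂, HasSecondDerivAt (fun z => corrector s z y)
        (-(2 * s) * corrector s z y / √(z ^ 2 + y ^ 2)) c₂ z ∧
      HasSecondDerivAt (fun y => corrector s z y) g₁ g₂ y ∧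
      0 ≤ c₂ + g₂ + (1 - 2 * s) / y * g₁ := by
  refine ⟨_, _, _, hasSecondDerivAt_corrector_left hz hy, hasSecondDerivAt_corrector_right hz hy,
    ?_⟩
  have hpolar : √(z ^ 2 + y ^ 2) ^ 2 = z ^ 2 + y ^ 2 := Real.sq_sqrt (by positivity)
  have hr : 0 < √(z ^ 2 + y ^ 2) := by positivity
  have hcos := div_sqrt_sq_add_sq_le_one z y
  have hcorr := corrector_nonneg (s := s) hz.le hy.le
  calc 0 ≤ 4 * s ^ 2 * (1 - z / √(z ^ 2 + y ^ 2)) / y ^ 2 * corrector s z y := by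
        have := sub_nonneg.2 hcos
        positivity
    _ = _ := by rw [← corrector_equation s hr hy hpolar]; ring

lemma barrier_supersolution (hs : 0 ≤ s) (hs' : s ≤ 1 / 2) (hα : 0 < α) (hα' : α ≤ 1 / 4)
    (hz : 0 < z) (hy : 0 < y) :
    ∃ c₁ c₂ g₁ g₂, HasSecondDerivAt (fun z => barrier s α z y) c₁ c₂ z ∧
      HasSecondDerivAt (fun y => barrier s α z y) g₁ g₂ y ∧
      c₂ + g₂ + (1 - 2 * s) / y * g₁ ≤ -(α * z ^ (α - 2)) := by
  obtain ⟨c₂, g₁, g₂, hleft, hright, hsuper⟩ := corrector_supersolution (s := s) hz hy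
  refine ⟨_, _, _, _,
    (hasSecondDerivAt_rpow α hz).mul ((hasSecondDerivAt_const 5 z).sub hleft),
    ((hasSecondDerivAt_const 5 y).sub hright).const_mul (z ^ α), ?_⟩
  have hcos := div_sqrt_sq_add_sq_le_one z y
  have hcorr := corrector_nonneg (s := s) hz.le hy.le
  have hcorr' := corrector_le_one hs hz.le hy.le
  have hpow : z ^ (α - 1) = z ^ (α - 2) * z := by
    rw [← Real.rpow_add_one hz.ne']
    ring_nf
  have hcross : s * corrector s z y * (z / √(z ^ 2 + y ^ 2)) ≤ 1 / 2 * 1 * 1 := by gcongr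
  have hdiag : (α - 1) * (5 - corrector s z y) ≤ -3 := by nlinarith
  have hrest := mul_nonneg (Real.rpow_nonneg hz.le α) hsuper
  calc _ = α * z ^ (α - 2) * ((α - 1) * (5 - corrector s z y) +
          4 * (s * corrector s z y * (z / √(z ^ 2 + y ^ 2)))) -
        z ^ α * (c₂ + g₂ + (1 - 2 * s) / y * g₁) := by
        rw [hpow]
        field_simp
        ring
    _ ≤ α * z ^ (α - 2) * (-3 + 4 * (1 / 2 * 1 * 1)) - 0 := by gcongr
    _ = -(α * z ^ (α - 2)) := by ring

lemma corrector_zero_right (hs : 0 < s) (z : ℝ) : corrector s z 0 = 0 := by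
  simp [corrector, hs.ne']

lemma barrier_zero_right (hs : 0 < s) (α z : ℝ) : barrier s α z 0 = 5 * z ^ α := by
  rw [barrier, corrector_zero_right hs]
  ring

lemma barrier_nonneg (hs : 0 ≤ s) (hz : 0 ≤ z) (hy : 0 ≤ y) : 0 ≤ barrier s α z y :=
  mul_nonneg (by positivity) (by linarith [corrector_le_one hs hz hy])

lemma barrier_le (hz : 0 ≤ z) (hy : 0 ≤ y) : barrier s α z y ≤ 5 * z ^ α := by
  rw [barrier, mul_comm]
  gcongr
  linarith [corrector_nonneg (s := s) hz hy]

lemma continuousAt_barrier (hs : 0 ≤ s) (α : ℝ) (hz : 0 < z) (y : ℝ) :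
    ContinuousAt (fun q : ℝ × ℝ => barrier s α q.1 q.2) (z, y) := by
  have hdenom : ContinuousAt (fun q : ℝ × ℝ => q.1 + √(q.1 ^ 2 + q.2 ^ 2)) (z, y) := by fun_prop
  have hquot := continuousAt_snd.div hdenom (by dsimp only; positivity)
  exact (continuousAt_fst.rpow_const (.inl hz.ne')).mul
    (continuousAt_const.sub (hquot.rpow_const (.inr (by positivity))))

end Barrier

/-! ### Half balls and `a`-harmonic functions -/

section HalfBall

variable {n : ℕ} {r : ℝ}

lemma isOpen_halfBall (n : ℕ) (r : ℝ) : IsOpen (halfBall n r) := by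
  have hball : IsOpen {p : En n × ℝ | ‖p.1‖ ^ 2 + p.2 ^ 2 < r ^ 2} :=
    isOpen_lt (by fun_prop) continuous_const
  exact hball.inter (isOpen_lt continuous_const continuous_snd)

lemma halfBall_subset_halfBallWithBase : halfBall n r ⊆ halfBallWithBase n r :=
  fun _ hp => ⟨hp.1, hp.2.le⟩

lemma halfBallWithBase_subset_closedHalfBall : halfBallWithBase n r ⊆ closedHalfBall n r :=
  fun _ hp => ⟨hp.1.le, hp.2⟩

lemma mk_zero_mem_halfBallWithBase {x : En n} (hx : x ∈ flatBall n r) :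
    (x, 0) ∈ halfBallWithBase n r :=
  ⟨by simpa using pow_lt_pow_left₀ hx (norm_nonneg x) two_ne_zero, le_rfl⟩

lemma eventually_mk_mem_halfBall {x : En n} (hx : x ∈ flatBall n r) :
    ∀ᶠ y in 𝓝[>] (0 : ℝ), (x, y) ∈ halfBall n r := by
  have hcont : Continuous fun y : ℝ => ‖x‖ ^ 2 + y ^ 2 := by fun_prop
  have hlt := hcont.continuousAt.eventually_lt_const (mk_zero_mem_halfBallWithBase hx).1
  filter_upwards [nhdsWithin_le_nhds hlt, self_mem_nhdsWithin] with y h h' using ⟨h, h'⟩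

end HalfBall

section SecondOrder

variable {n : ℕ} {a : ℝ} {w : En n × ℝ → ℝ} {Ω : Set (En n × ℝ)} {p : En n × ℝ}

lemma D2_eq_fderiv_fderiv (hw : ContDiffAt ℝ 2 w p) (v : En n × ℝ) :
    D2 w p v = fderiv ℝ (fderiv ℝ w) p v v := by
  have hderiv : ContDiffAt ℝ 1 (fderiv ℝ w) p := hw.fderiv_right (by norm_num)
  have h := (hderiv.differentiableAt (by norm_num)).hasFDerivAt.clm_apply (hasFDerivAt_const v p)
  simp [D2, h.fderiv]

lemma sum_bilinear_apply_orthonormalBasis {ι κ E : Type*} [Fintype ι] [Fintype κ]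
    [NormedAddCommGroup E] [InnerProductSpace ℝ E] [FiniteDimensional ℝ E]
    (B : E →ₗ[ℝ] E →ₗ[ℝ] ℝ) (b : OrthonormalBasis ι ℝ E) (b' : OrthonormalBasis κ ℝ E) :
    ∑ i, B (b i) (b i) = ∑ i, B (b' i) (b' i) := by
  simpa using congrArg (TensorProduct.lift B)
    ((InnerProductSpace.canonicalCovariantTensor_eq_sum E b).symm.trans
      (InnerProductSpace.canonicalCovariantTensor_eq_sum E b'))

lemma lap_eq_sum_orthonormalBasis (hw : ContDiffAt ℝ 2 w p)
    (b : OrthonormalBasis (Fin n) ℝ (En n)) : lap w p = ∑ i, D2 w p (b i, 0) + D2 w p (0, 1) := by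
  have h := sum_bilinear_apply_orthonormalBasis
    ((fderiv ℝ (fderiv ℝ w) p).bilinearComp (.inl ℝ (En n) ℝ) (.inl ℝ (En n) ℝ)).toLinearMap₁₂
    b (EuclideanSpace.basisFun (Fin n) ℝ)
  simp only [lap, D2_eq_fderiv_fderiv hw]
  simpa using h.symm

lemma fderiv_const_mul_fun (c : ℝ) (w : En n × ℝ → ℝ) :
    fderiv ℝ (fun q => c * w q) = fun q => c • fderiv ℝ w q := by
  funext q
  exact congrFun (fderiv_const_smul_field (f := w) c) q

lemma D2_const_mul (c : ℝ) (w : En n × ℝ → ℝ) (p v : En n × ℝ) :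
    D2 (fun q => c * w q) p v = c * D2 w p v := by
  simp [D2, fderiv_const_mul_fun]

lemma IsAHarmonicOn.contDiffAt (hw : IsAHarmonicOn a w Ω) (hΩ : IsOpen Ω) (hp : p ∈ Ω) :
    ContDiffAt ℝ 2 w p :=
  hw.1.contDiffAt (hΩ.mem_nhds hp)

lemma IsAHarmonicOn.const_mul (hw : IsAHarmonicOn a w Ω) (c : ℝ) :
    IsAHarmonicOn a (fun q => c * w q) Ω := by
  refine ⟨contDiffOn_const.mul hw.1, fun p hp => ?_⟩
  have h := congrArg (c * ·) (hw.2 p hp)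
  simp only [lap, D2_const_mul, fderiv_const_mul_fun, ← Finset.mul_sum] at h ⊢
  simp only [smul_apply, smul_eq_mul]
  linear_combination h

lemma NormalDerivLimit.const_mul {x : En n} {L : ℝ} (hw : NormalDerivLimit a w x L) (c : ℝ) :
    NormalDerivLimit a (fun q => c * w q) x (c * L) := by
  refine (Tendsto.const_mul c hw).congr fun y => ?_
  simp only [fderiv_const_mul_fun, smul_apply, smul_eq_mul]
  ring

end SecondOrder

/-! ### Normalized solutions -/

lemma tendsto_base_of_continuousOn {n : ℕ} {u : ℝ → En n × ℝ → ℝ} {t : ℝ} {x : En n}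
    (hu : ContinuousOn (fun q : ℝ × (En n × ℝ) => u q.1 q.2)
      (Icc (-1 : ℝ) 0 ×ˢ closedHalfBall n 1))
    (ht : t ∈ Icc (-1 : ℝ) 0) (hx : x ∈ flatBall n 1) :
    Tendsto (fun y => u t (x, y)) (𝓝[>] 0) (𝓝 (u t (x, 0))) := by
  have hbase : (t, (x, (0 : ℝ))) ∈ Icc (-1 : ℝ) 0 ×ˢ closedHalfBall n 1 :=
    ⟨ht, halfBallWithBase_subset_closedHalfBall (mk_zero_mem_halfBallWithBase hx)⟩
  refine (hu _ hbase).tendsto.comp (f := fun y => (t, (x, y))) (tendsto_nhdsWithin_iff.2 ⟨?_, ?_⟩)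
  · have : Continuous fun y : ℝ => (t, (x, y)) := by fun_prop
    exact this.continuousWithinAt
  · filter_upwards [eventually_mk_mem_halfBall hx] with y hy
    exact ⟨ht, halfBallWithBase_subset_closedHalfBall (halfBall_subset_halfBallWithBase hy)⟩

/-- A solution which, like its right-hand side, is bounded by `1`. The equation at `y = 0` is kept
in the form in which comparison arguments see it: the backward derivative of `u` along the
characteristic through `(t, x)` differs from the conormal derivative by at most `1`. -/
structure IsNormalizedSolution {n : ℕ} (s M : ℝ) (b : ℝ → En n → En n)
    (u : ℝ → En n × ℝ → ℝ) : Prop where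
  continuousOn : ContinuousOn (fun q : ℝ × (En n × ℝ) => u q.1 q.2)
    (Icc (-1 : ℝ) 0 ×ˢ closedHalfBall n 1)
  isAHarmonicOn : ∀ t ∈ Icc (-1 : ℝ) 0, IsAHarmonicOn (1 - 2 * s) (u t) (halfBall n 1)
  exists_conormal : ∀ t ∈ Ioc (-1 : ℝ) 0, ∀ x ∈ flatBall n 1,
    ∃ L c, NormalDerivLimit (1 - 2 * s) (u t) x L ∧
      HasDerivWithinAt (fun σ : ℝ => u (t + σ) (x + σ • b t x, 0)) c (Iic 0) 0 ∧ |c - L| ≤ 1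
  abs_le_one : ∀ t ∈ Icc (-1 : ℝ) 0, ∀ p ∈ halfBallWithBase n 1, |u t p| ≤ 1
  norm_drift_le : ∀ t ∈ Icc (-1 : ℝ) 0, ∀ x ∈ flatBall n 1, ‖b t x‖ ≤ M
  norm_drift_sub_le : ∀ t ∈ Icc (-1 : ℝ) 0, ∀ x ∈ flatBall n 1, ∀ x' ∈ flatBall n 1,
    ‖b t x - b t x'‖ ≤ M * ‖x - x'‖ ^ (1 - 2 * s)

lemma hasDerivWithinAt_characteristic {n : ℕ} {v : ℝ × En n → ℝ} {t : ℝ} {x : En n}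
    (hv : DifferentiableWithinAt ℝ v (Ioc (-1 : ℝ) 0 ×ˢ flatBall n 1) (t, x))
    (ht : t ∈ Ioc (-1 : ℝ) 0) (hx : x ∈ flatBall n 1) (e : En n) :
    HasDerivWithinAt (fun σ : ℝ => v (t + σ, x + σ • e))
      (fderivWithin ℝ v (Ioc (-1 : ℝ) 0 ×ˢ flatBall n 1) (t, x) (1, e)) (Iic 0) 0 := by
  have hcurve : HasDerivAt (fun σ : ℝ => (t + σ, x + σ • e)) (1, e) 0 := by
    simpa using ((hasDerivAt_id (0 : ℝ)).const_add t).prodMk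
      (((hasDerivAt_id (0 : ℝ)).smul_const e).const_add x)
  have hstays : ∀ᶠ σ in 𝓝[Iic 0] (0 : ℝ),
      (t + σ, x + σ • e) ∈ Ioc (-1 : ℝ) 0 ×ˢ flatBall n 1 := by
    have hopen : Ioi (-1 : ℝ) ×ˢ flatBall n 1 ∈ 𝓝 (t + (0 : ℝ), x + (0 : ℝ) • e) := by
      have : IsOpen (flatBall n 1) := isOpen_lt continuous_norm continuous_const
      simpa using prod_mem_nhds (Ioi_mem_nhds ht.1) (this.mem_nhds hx)
    filter_upwards [nhdsWithin_le_nhds (hcurve.continuousAt.eventually_mem hopen),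
      self_mem_nhdsWithin] with σ hσ hσ'
    exact ⟨⟨hσ.1, by linarith [ht.2, mem_Iic.1 hσ']⟩, hσ.2⟩
  have hfderiv : HasFDerivWithinAt v (fderivWithin ℝ v (Ioc (-1 : ℝ) 0 ×ˢ flatBall n 1) (t, x))
      (Ioc (-1 : ℝ) 0 ×ˢ flatBall n 1) (t + 0, x + (0 : ℝ) • e) := by
    simpa using hv.hasFDerivWithinAt
  exact (hfderiv.comp_hasDerivWithinAt (s := Iic 0 ∩ {σ : ℝ | (t + σ, x + σ • e) ∈ _}) (0 : ℝ)
    hcurve.hasDerivWithinAt fun σ hσ => hσ.2).mono_of_mem_nhdsWithin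
      (inter_mem self_mem_nhdsWithin hstays)

lemma IsExtDDSolution.exists_conormal {n : ℕ} {a : ℝ} {b : ℝ → En n → En n}
    {f : ℝ → En n → ℝ} {u : ℝ → En n × ℝ → ℝ} (hu : IsExtDDSolution a b f u) {t : ℝ} {x : En n}
    (ht : t ∈ Ioc (-1 : ℝ) 0) (hx : x ∈ flatBall n 1) :
    ∃ L, NormalDerivLimit a (u t) x L ∧
      HasDerivWithinAt (fun σ : ℝ => u (t + σ) (x + σ • b t x, 0)) (f t x + L) (Iic 0) 0 := by
  obtain ⟨L, hL, heq⟩ := hu.2.2.2 t x ⟨ht, hx⟩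
  have h := hasDerivWithinAt_characteristic (hu.2.2.1 (t, x) ⟨ht, hx⟩) ht hx (b t x)
  have hdir : ((1 : ℝ), b t x) = (1, 0) + (0, b t x) := by simp
  rw [hdir, map_add, sub_eq_iff_eq_add.1 heq] at h
  exact ⟨L, hL, h⟩

lemma IsExtDDSolution.abs_le_on_halfBallWithBase {n : ℕ} {a U : ℝ} {b : ℝ → En n → En n}
    {f : ℝ → En n → ℝ} {u : ℝ → En n × ℝ → ℝ} (hu : IsExtDDSolution a b f u)
    (hU : ∀ t ∈ Icc (-1 : ℝ) 0, ∀ p ∈ halfBall n 1, |u t p| ≤ U) :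
    ∀ t ∈ Icc (-1 : ℝ) 0, ∀ p ∈ halfBallWithBase n 1, |u t p| ≤ U := by
  rintro t ht ⟨x, y⟩ ⟨hxy, hy⟩
  obtain hy | rfl := (show 0 ≤ y from hy).lt_or_eq
  · exact hU t ht _ ⟨hxy, hy⟩
  · have hx : x ∈ flatBall n 1 := by simpa [flatBall] using hxy
    exact le_of_tendsto (tendsto_base_of_continuousOn hu.1 ht hx).abs
      ((eventually_mk_mem_halfBall hx).mono fun y hy => hU t ht _ hy)

namespace IsNormalizedSolution

variable {n : ℕ} {s M : ℝ} {b : ℝ → En n → En n} {u : ℝ → En n × ℝ → ℝ}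

lemma of_isExtDDSolution {f : ℝ → En n → ℝ} {V : ℝ} (hV : 0 < V)
    (hb : ∀ t ∈ Icc (-1 : ℝ) 0, (∀ x ∈ flatBall n 1, ‖b t x‖ ≤ M) ∧
      ∀ x ∈ flatBall n 1, ∀ x' ∈ flatBall n 1,
        ‖b t x - b t x'‖ ≤ M * ‖x - x'‖ ^ (1 - 2 * s))
    (hf : ∀ t ∈ Icc (-1 : ℝ) 0, ∀ x ∈ flatBall n 1, |f t x| ≤ V)
    (hu : IsExtDDSolution (1 - 2 * s) b f u)
    (huV : ∀ t ∈ Icc (-1 : ℝ) 0, ∀ p ∈ halfBall n 1, |u t p| ≤ V) :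
    IsNormalizedSolution s M b (fun t p => V⁻¹ * u t p) where
  continuousOn := continuousOn_const.mul hu.1
  isAHarmonicOn t ht := (hu.2.1 t ht).const_mul V⁻¹
  exists_conormal t ht x hx := by
    obtain ⟨L, hL, hchar⟩ := hu.exists_conormal ht hx
    refine ⟨_, _, hL.const_mul V⁻¹, hchar.const_mul V⁻¹, ?_⟩
    rw [← mul_sub, add_sub_cancel_right, abs_mul, abs_of_pos (inv_pos.2 hV), inv_mul_le_one₀ hV]
    exact hf t (Ioc_subset_Icc_self ht) x hx
  abs_le_one t ht p hp := by
    rw [abs_mul, abs_of_pos (inv_pos.2 hV), inv_mul_le_one₀ hV]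
    exact hu.abs_le_on_halfBallWithBase huV t ht p hp
  norm_drift_le t ht := (hb t ht).1
  norm_drift_sub_le t ht := (hb t ht).2

lemma neg (h : IsNormalizedSolution s M b u) :
    IsNormalizedSolution s M b (fun t p => -u t p) where
  continuousOn := h.continuousOn.neg
  isAHarmonicOn t ht := by simpa using (h.isAHarmonicOn t ht).const_mul (-1)
  exists_conormal t ht x hx := by
    obtain ⟨L, c, hL, hc, hle⟩ := h.exists_conormal t ht x hx
    exact ⟨-L, -c, by simpa using hL.const_mul (-1), hc.neg, by rwa [neg_sub_neg, abs_sub_comm]⟩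
  abs_le_one t ht p hp := by simpa using h.abs_le_one t ht p hp
  norm_drift_le := h.norm_drift_le
  norm_drift_sub_le := h.norm_drift_sub_le

lemma sub_le_two (h : IsNormalizedSolution s M b u) {t t' : ℝ} {p p' : En n × ℝ}
    (ht : t ∈ Icc (-1 : ℝ) 0) (ht' : t' ∈ Icc (-1 : ℝ) 0) (hp : p ∈ halfBallWithBase n 1)
    (hp' : p' ∈ halfBallWithBase n 1) : u t p - u t' p' ≤ 2 := by
  linarith [abs_le.1 (h.abs_le_one t ht p hp), abs_le.1 (h.abs_le_one t' ht' p' hp')]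

end IsNormalizedSolution

/-! ### Interior maxima -/

section InteriorMaximum

variable {n : ℕ} {a k : ℝ} {w w' : En n × ℝ → ℝ}

lemma isLocalMax_comp_line {E : Type*} [AddCommGroup E] [Module ℝ E] [TopologicalSpace E]
    [ContinuousAdd E] [ContinuousSMul ℝ E] {F : E → ℝ} {q : E} (hmax : IsLocalMax F q) (v : E) :
    IsLocalMax (fun σ : ℝ => F (q + σ • v)) 0 := by
  have hline : Continuous fun σ : ℝ => q + σ • v := by fun_prop
  exact IsLocalMax.comp_continuous (by simpa using hmax) hline.continuousAt

lemma fderiv_sub_eq_and_D2_sub_le_of_isLocalMax {p p' : En n × ℝ} (hw : ContDiffAt ℝ 2 w p)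
    (hw' : ContDiffAt ℝ 2 w' p') {v v' : En n × ℝ} {ψ : ℝ → ℝ} {ψ₁ ψ₂ : ℝ}
    (hψ : HasSecondDerivAt ψ ψ₁ ψ₂ 0)
    (hmax : IsLocalMax (fun σ : ℝ => w (p + σ • v) - w' (p' + σ • v') - ψ σ) 0) :
    fderiv ℝ w p v - fderiv ℝ w' p' v' = ψ₁ ∧ D2 w p v - D2 w' p' v' ≤ ψ₂ := by
  obtain ⟨hfirst, hsecond⟩ := (((hasSecondDerivAt_comp_line hw v).sub
    (hasSecondDerivAt_comp_line hw' v')).sub hψ).isLocalMax hmax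
  exact ⟨sub_eq_zero.1 hfirst, sub_nonpos.1 hsecond⟩

lemma D2_neg_right {p : En n × ℝ} (hw : ContDiffAt ℝ 2 w p) (v : En n × ℝ) :
    D2 w p (-v) = D2 w p v := by
  simp [D2_eq_fderiv_fderiv hw]

/-- The penalty in the doubling of horizontal variables: `q = (x, x', y)` is penalized by the
profile `Φ (|x - x'| / 2, y)` and localized near `(xb, xb, yb)`. -/
def horizontalPenalty (Φ : ℝ → ℝ → ℝ) (k : ℝ) (xb : En n) (yb : ℝ) (q : En n × En n × ℝ) : ℝ :=
  Φ (‖q.1 - q.2.1‖ / 2) q.2.2 + k * (‖q.1 - xb‖ ^ 2 + ‖q.2.1 - xb‖ ^ 2 + (q.2.2 - yb) ^ 2)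

lemma exists_norm_eq_one_and_eq_smul {E : Type*} [NormedAddCommGroup E] [NormedSpace ℝ E]
    {v : E} (hv : v ≠ 0) : ∃ e : E, ‖e‖ = 1 ∧ v = ‖v‖ • e := by
  have : ‖v‖ ≠ 0 := norm_ne_zero_iff.2 hv
  exact ⟨‖v‖⁻¹ • v, by simp [norm_smul, this], by simp [smul_smul, this]⟩

lemma norm_sub_reflection_line {E : Type*} [NormedAddCommGroup E] [InnerProductSpace ℝ E]
    {x x' e : E} {z : ℝ} (he : ‖e‖ = 1) (hx : x - x' = (2 * z) • e) (v : E) (σ : ℝ) :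
    ‖x + σ • v - (x' + σ • (ℝ ∙ e)ᗮ.reflection v)‖ / 2 = |z + σ * ⟪e, v⟫| := by
  have hdiff : x + σ • v - (x' + σ • (ℝ ∙ e)ᗮ.reflection v) = (2 * (z + σ * ⟪e, v⟫)) • e := by
    rw [Submodule.reflection_orthogonal_apply, Submodule.reflection_singleton_apply, he]
    calc _ = x - x' + (2 * (σ * ⟪e, v⟫)) • e := by norm_num; module
      _ = _ := by rw [hx]; module
  rw [hdiff, norm_smul, he, Real.norm_eq_abs, abs_mul, abs_two]
  ring

lemma lap_sub_lap_le_of_isLocalMax {p p' : En n × ℝ} (hw : ContDiffAt ℝ 2 w p)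
    (hw' : ContDiffAt ℝ 2 w' p') (e e' : OrthonormalBasis (Fin n) ℝ (En n)) {ψ : Fin n → ℝ → ℝ}
    {ψ₁ ψ₂ : Fin n → ℝ} {φ : ℝ → ℝ} {φ₁ φ₂ : ℝ} {v : En n × ℝ} (hv : v = (0, 1) ∨ v = -(0, 1))
    (hψ : ∀ i, HasSecondDerivAt (ψ i) (ψ₁ i) (ψ₂ i) 0) (hφ : HasSecondDerivAt φ φ₁ φ₂ 0)
    (hmax : ∀ i, IsLocalMax
      (fun σ : ℝ => w (p + σ • (e i, 0)) - w' (p' + σ • (e' i, 0)) - ψ i σ) 0)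
    (hmax_y : IsLocalMax (fun σ : ℝ => w (p + σ • (0, 1)) - w' (p' + σ • v) - φ σ) 0) :
    lap w p - lap w' p' ≤ ∑ i, ψ₂ i + φ₂ := by
  have hhor : ∑ i, (D2 w p (e i, 0) - D2 w' p' (e' i, 0)) ≤ ∑ i, ψ₂ i := by
    gcongr with i
    exact (fderiv_sub_eq_and_D2_sub_le_of_isLocalMax hw hw' (hψ i) (hmax i)).2
  have hvert := (fderiv_sub_eq_and_D2_sub_le_of_isLocalMax hw hw' hφ hmax_y).2
  have hdir : D2 w' p' v = D2 w' p' (0, 1) := by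
    rcases hv with rfl | rfl
    exacts [rfl, D2_neg_right hw' _]
  rw [lap_eq_sum_orthonormalBasis hw e, lap_eq_sum_orthonormalBasis hw' e']
  rw [Finset.sum_sub_distrib] at hhor
  linarith

lemma hasSecondDerivAt_horizontalPenalty_reflection {Φ : ℝ → ℝ → ℝ} {c₁ c₂ : ℝ}
    (k : ℝ) (xb : En n) (yb : ℝ) {x x' e v : En n} {y z : ℝ} (he : ‖e‖ = 1) (hz : 0 < z)
    (hx : x - x' = (2 * z) • e) (hv : ‖v‖ = 1) (hΦ : HasSecondDerivAt (fun z => Φ z y) c₁ c₂ z) :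
    ∃ ψ₁, HasSecondDerivAt (fun σ : ℝ => horizontalPenalty Φ k xb yb
      ((x, x', y) + σ • (v, (ℝ ∙ e)ᗮ.reflection v, 0))) ψ₁ (c₂ * ⟪e, v⟫ ^ 2 + 4 * k) 0 := by
  have hpos : ∀ᶠ σ : ℝ in 𝓝 0, 0 < z + σ * ⟪e, v⟫ := by
    have hcont : Continuous fun σ : ℝ => z + σ * ⟪e, v⟫ := by fun_prop
    exact hcont.continuousAt.eventually_const_lt (by simpa using hz)
  have hquad := ((hasSecondDerivAt_norm_add_smul_sq (x - xb) v).add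
    (hasSecondDerivAt_norm_add_smul_sq (x' - xb) ((ℝ ∙ e)ᗮ.reflection v))).add
    (hasSecondDerivAt_const ((y - yb) ^ 2) 0)
  refine ⟨_, (((hΦ.comp_affine ⟪e, v⟫).add (hquad.const_mul k)).congr_derivs rfl
    ?_).congr_of_eventuallyEq ?_⟩
  · rw [LinearIsometryEquiv.norm_map, hv]
    ring
  · filter_upwards [hpos] with σ hσ
    have hdist := norm_sub_reflection_line he hx v σ
    rw [abs_of_pos hσ] at hdist
    simp [horizontalPenalty, hdist, add_sub_right_comm _ _ xb]

lemma hasSecondDerivAt_horizontalPenalty_vertical {Φ : ℝ → ℝ → ℝ} {g₁ g₂ : ℝ} (k : ℝ) (xb : En n)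
    (yb : ℝ) (x x' : En n) {y : ℝ} (hΦ : HasSecondDerivAt (Φ (‖x - x'‖ / 2)) g₁ g₂ y) :
    HasSecondDerivAt (fun σ : ℝ => horizontalPenalty Φ k xb yb ((x, x', y) + σ • (0, 0, 1)))
      (g₁ + 2 * k * (y - yb)) (g₂ + 2 * k) 0 := by
  have h := (hΦ.add (((hasSecondDerivAt_const (‖x - xb‖ ^ 2 + ‖x' - xb‖ ^ 2) y).add
    (hasSecondDerivAt_sub_sq yb y)).const_mul k)).comp_affine 1
  simpa [horizontalPenalty] using h.congr_derivs (by ring) (by ring)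

lemma div_mul_penalty_deriv_le {y yb : ℝ} (ha : 0 ≤ a) (ha' : a ≤ 1) (hk : 0 ≤ k) (hy : 0 < y)
    (hyb : 0 ≤ yb) : a / y * (2 * k * (y - yb)) ≤ 2 * k := by
  rw [div_mul_eq_mul_div, div_le_iff₀ hy]
  nlinarith [mul_nonneg hk hy.le, mul_nonneg (mul_nonneg ha hk) hyb]

/-- The two points are coupled by reflection in the hyperplane orthogonal to `x - x'`, so that the
horizontal second derivatives see the profile only through `c₂`. -/
lemma horizontal_doubling_interior {Φ : ℝ → ℝ → ℝ} {c₁ c₂ g₁ g₂ : ℝ} (ha : 0 ≤ a) (ha' : a ≤ 1)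
    (hk : 0 ≤ k) (hw : IsAHarmonicOn a w (halfBall n 1)) {x x' xb : En n} {y yb : ℝ}
    (hyb : 0 ≤ yb) (hx : (x, y) ∈ halfBall n 1) (hx' : (x', y) ∈ halfBall n 1) (hne : x ≠ x')
    (hΦ : HasSecondDerivAt (fun z => Φ z y) c₁ c₂ (‖x - x'‖ / 2))
    (hΦ_y : HasSecondDerivAt (Φ (‖x - x'‖ / 2)) g₁ g₂ y)
    (hmax : IsLocalMax (fun q : En n × En n × ℝ =>
      w (q.1, q.2.2) - w (q.2.1, q.2.2) - horizontalPenalty Φ k xb yb q) (x, x', y)) :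
    0 ≤ c₂ + g₂ + a / y * g₁ + k * (4 * n + 4) := by
  obtain ⟨e, he, hxe⟩ := exists_norm_eq_one_and_eq_smul (sub_ne_zero.2 hne)
  have hz : 0 < ‖x - x'‖ / 2 := half_pos (norm_pos_iff.2 (sub_ne_zero.2 hne))
  have hw₁ := hw.contDiffAt (isOpen_halfBall n 1) hx
  have hw₂ := hw.contDiffAt (isOpen_halfBall n 1) hx'
  let basis := EuclideanSpace.basisFun (Fin n) ℝ
  choose ψ₁ hψ using fun i => hasSecondDerivAt_horizontalPenalty_reflection k xb yb he hz
    (hxe.trans (by rw [mul_div_cancel₀ _ two_ne_zero])) (basis.norm_eq_one i) hΦ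
  have hφ := hasSecondDerivAt_horizontalPenalty_vertical k xb yb x x' hΦ_y
  have hmax_y := isLocalMax_comp_line hmax (0, 0, 1)
  have hlap := lap_sub_lap_le_of_isLocalMax hw₁ hw₂ basis (basis.map (ℝ ∙ e)ᗮ.reflection)
    (.inl rfl) hψ hφ
    (fun i => isLocalMax_comp_line hmax (basis i, (ℝ ∙ e)ᗮ.reflection (basis i), 0)) hmax_y
  have hfirst := (fderiv_sub_eq_and_D2_sub_le_of_isLocalMax (v := (0, 1)) (v' := (0, 1))
    hw₁ hw₂ hφ hmax_y).1
  have htrace : ∑ i, (c₂ * ⟪e, basis i⟫ ^ 2 + 4 * k) = c₂ + 4 * k * n := by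
    rw [Finset.sum_add_distrib, ← Finset.mul_sum, basis.sum_sq_inner_left, he]
    simp [mul_comm]
  have hdrift := div_mul_penalty_deriv_le ha ha' hk hx.2 hyb
  have hzero : lap w (x, y) - lap w (x', y) + a / y * (g₁ + 2 * k * (y - yb)) = 0 := by
    rw [← hfirst]
    linear_combination hw.2 _ hx - hw.2 _ hx'
  rw [htrace] at hlap
  linarith

lemma one_point_interior {h : ℝ → ℝ} {h₁ h₂ m : ℝ} (hw : IsAHarmonicOn a w (halfBall n 1))
    {x xb : En n} {y : ℝ} (hx : (x, y) ∈ halfBall n 1) (hh : HasSecondDerivAt h h₁ h₂ y)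
    (hmax : IsLocalMax (fun q : En n × ℝ => w q - (m * ‖q.1 - xb‖ ^ 2 + h q.2)) (x, y)) :
    0 ≤ 2 * n * m + h₂ + a / y * h₁ := by
  have hw₁ := hw.contDiffAt (isOpen_halfBall n 1) hx
  have hw₀ : ContDiffAt ℝ 2 (fun _ : En n × ℝ => (0 : ℝ)) (x, y) := contDiffAt_const
  let basis := EuclideanSpace.basisFun (Fin n) ℝ
  have hψ (i : Fin n) : HasSecondDerivAt
      (fun σ : ℝ => m * ‖x + σ • basis i - xb‖ ^ 2 + h (y + σ * 0))
      (m * (2 * ⟪x - xb, basis i⟫)) (2 * m) 0 := by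
    have hsq := hasSecondDerivAt_norm_add_smul_sq (x - xb) (basis i)
    rw [basis.norm_eq_one] at hsq
    simpa [add_sub_right_comm, mul_comm] using
      (hsq.const_mul m).add (hasSecondDerivAt_const (h y) 0)
  have hφ : HasSecondDerivAt (fun σ : ℝ => m * ‖x + σ • (0 : En n) - xb‖ ^ 2 + h (y + σ * 1))
      h₁ h₂ 0 := by
    simpa using (hasSecondDerivAt_const (m * ‖x - xb‖ ^ 2) 0).add (hh.comp_affine 1)
  have hmax_line (v : En n × ℝ) : IsLocalMax (fun σ : ℝ => w ((x, y) + σ • v) - 0 -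
      (m * ‖x + σ • v.1 - xb‖ ^ 2 + h (y + σ * v.2))) 0 := by
    simpa using isLocalMax_comp_line hmax v
  have hlap := lap_sub_lap_le_of_isLocalMax hw₁ hw₀ basis basis (.inl rfl) hψ hφ
    (fun i => hmax_line (basis i, 0)) (hmax_line (0, 1))
  have hfirst := (fderiv_sub_eq_and_D2_sub_le_of_isLocalMax (v' := (0, 1)) hw₁ hw₀ hφ
    (hmax_line (0, 1))).1
  have hlap₀ : lap (fun _ : En n × ℝ => (0 : ℝ)) (x, y) = 0 := by simp [lap, D2]
  simp only [fderiv_fun_const, Pi.zero_apply, zero_apply, sub_zero] at hfirst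
  rw [hlap₀, Finset.sum_const, Finset.card_univ, Fintype.card_fin, nsmul_eq_mul] at hlap
  rw [← hfirst]
  linear_combination hlap - hw.2 _ hx

/-- The penalty in the doubling of the vertical variable, `q = (x, y, y')`. -/
def verticalPenalty (φ : ℝ → ℝ) (k : ℝ) (xb : En n) (yb : ℝ) (q : En n × ℝ × ℝ) : ℝ :=
  φ (q.2.1 - q.2.2) + k * (‖q.1 - xb‖ ^ 2 + (q.2.1 - yb) ^ 2)

lemma hasSecondDerivAt_verticalPenalty_horizontal (φ : ℝ → ℝ) (k : ℝ) (x xb : En n)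
    (y y' yb : ℝ) {v : En n} (hv : ‖v‖ = 1) :
    HasSecondDerivAt (fun σ : ℝ => verticalPenalty φ k xb yb ((x, y, y') + σ • (v, 0, 0)))
      (k * (2 * ⟪x - xb, v⟫)) (2 * k) 0 := by
  have h := (hasSecondDerivAt_const (φ (y - y')) 0).add
    (((hasSecondDerivAt_norm_add_smul_sq (x - xb) v).add
      (hasSecondDerivAt_const ((y - yb) ^ 2) 0)).const_mul k)
  rw [hv] at h
  simpa [verticalPenalty, add_sub_right_comm _ _ xb] using h.congr_derivs (by ring) (by ring)

lemma hasSecondDerivAt_verticalPenalty_vertical {φ : ℝ → ℝ} {φ₁ φ₂ y y' : ℝ} (k : ℝ)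
    (x xb : En n) (yb : ℝ) (hφ : HasSecondDerivAt φ φ₁ φ₂ (y - y')) (c c' : ℝ) :
    HasSecondDerivAt (fun σ : ℝ => verticalPenalty φ k xb yb ((x, y, y') + σ • (0, c, c')))
      (φ₁ * (c - c') + 2 * k * (y - yb) * c) (φ₂ * (c - c') ^ 2 + 2 * k * c ^ 2) 0 := by
  have h := (hφ.comp_affine (c - c')).add (((hasSecondDerivAt_const (‖x - xb‖ ^ 2) 0).add
    ((hasSecondDerivAt_sub_sq yb y).comp_affine c)).const_mul k)
  have hdiff (σ : ℝ) : y + σ * c - (y' + σ * c') = y - y' + σ * (c - c') := by ring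
  simpa [verticalPenalty, hdiff] using h.congr_derivs (by ring) (by ring)

lemma vertical_doubling_interior {φ : ℝ → ℝ} {φ₁ φ₂ : ℝ} (ha : 0 ≤ a) (ha' : a ≤ 1)
    (hk : 0 ≤ k) (hw : IsAHarmonicOn a w (halfBall n 1)) {x xb : En n} {y y' yb : ℝ}
    (hyb : 0 ≤ yb) (hx : (x, y) ∈ halfBall n 1) (hx' : (x, y') ∈ halfBall n 1) (hy : y' < y)
    (hφ : HasSecondDerivAt φ φ₁ φ₂ (y - y')) (hφ₁ : 0 ≤ φ₁)
    (hmax : IsLocalMax (fun q : En n × ℝ × ℝ =>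
      w (q.1, q.2.1) - w (q.1, q.2.2) - verticalPenalty φ k xb yb q) (x, y, y')) :
    0 ≤ 4 * φ₂ + k * (2 * n + 4) := by
  have hy' : 0 < y' := hx'.2
  have hw₁ := hw.contDiffAt (isOpen_halfBall n 1) hx
  have hw₂ := hw.contDiffAt (isOpen_halfBall n 1) hx'
  let basis := EuclideanSpace.basisFun (Fin n) ℝ
  have hpen := hasSecondDerivAt_verticalPenalty_vertical k x xb yb hφ
  have htop := (fderiv_sub_eq_and_D2_sub_le_of_isLocalMax (v := (0, 1)) (v' := (0, 0)) hw₁ hw₂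
    (hpen 1 0) (isLocalMax_comp_line hmax (0, 1, 0))).1
  have hbottom := (fderiv_sub_eq_and_D2_sub_le_of_isLocalMax (v := (0, 0)) (v' := (0, 1)) hw₁ hw₂
    (hpen 0 1) (isLocalMax_comp_line hmax (0, 0, 1))).1
  have hlap := lap_sub_lap_le_of_isLocalMax (v := (0, -1)) hw₁ hw₂ basis basis (.inr (by simp))
    (fun i => hasSecondDerivAt_verticalPenalty_horizontal φ k x xb y y' yb (basis.norm_eq_one i))
    (hpen 1 (-1)) (fun i => isLocalMax_comp_line hmax (basis i, 0, 0))
    (isLocalMax_comp_line hmax (0, 1, -1))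
  rw [Prod.mk_zero_zero, map_zero] at htop hbottom
  rw [Finset.sum_const, Finset.card_univ, Fintype.card_fin, nsmul_eq_mul] at hlap
  have hweight : a / y * φ₁ ≤ a / y' * φ₁ := by gcongr
  have hdrift := div_mul_penalty_deriv_le ha ha' hk hx.2 hyb
  have heq := hw.2 _ hx
  have heq' := hw.2 _ hx'
  rw [show fderiv ℝ w (x, y) (0, 1) = φ₁ + 2 * k * (y - yb) by linarith] at heq
  rw [show fderiv ℝ w (x, y') (0, 1) = φ₁ by linarith] at heq'
  linear_combination hlap + hweight + hdrift + heq' - heq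

end InteriorMaximum

/-! ### Comparison at the base -/

lemma IsAHarmonicOn.hasDerivAt_vertical {n : ℕ} {a r : ℝ} {w : En n × ℝ → ℝ}
    (hw : IsAHarmonicOn a w (halfBall n r)) {x : En n} {y : ℝ} (hx : (x, y) ∈ halfBall n r) :
    HasDerivAt (fun y => w (x, y)) (fderiv ℝ w (x, y) (0, 1)) y :=
  ((hw.contDiffAt (isOpen_halfBall n r) hx).differentiableAt
    (by norm_num)).hasFDerivAt.comp_hasDerivAt y ((hasDerivAt_const y x).prodMk (hasDerivAt_id y))

lemma tendsto_mul_rpow_inv_add_sqrt {s z : ℝ} (hs : 0 ≤ s) (hs' : s < 1) (hz : 0 < z) (c k : ℝ) :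
    Tendsto (fun y => c * ((z + √(z ^ 2 + y ^ 2)) ^ (2 * s))⁻¹ + k * y ^ (2 - 2 * s)) (𝓝[>] 0)
      (𝓝 (c * ((2 * z) ^ (2 * s))⁻¹)) := by
  have hdenom : ContinuousAt (fun y : ℝ => z + √(z ^ 2 + y ^ 2)) 0 := by fun_prop
  have hinv := (hdenom.rpow_const (p := 2 * s) (.inr (by positivity))).inv₀ (by positivity)
  have hpow := Real.continuousAt_rpow_const 0 (2 - 2 * s) (.inr (by linarith))
  have h := ((hinv.const_mul c).fun_add (hpow.const_mul k)).tendsto.mono_left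
    (nhdsWithin_le_nhds (s := Ioi 0))
  simpa [Real.sqrt_sq hz.le, ← two_mul, Real.zero_rpow (by linarith : 2 - 2 * s ≠ 0)] using h

namespace IsNormalizedSolution

variable {n : ℕ} {s M N α k t tb yb : ℝ} {b : ℝ → En n → En n} {u : ℝ → En n × ℝ → ℝ}
  {x x' xb : En n}

lemma conormal_sub_le (h : IsNormalizedSolution s M b u) (hs : 0 < s) (hs' : s ≤ 1 / 2)
    (hk : 0 ≤ k) (hyb : 0 ≤ yb) (ht : t ∈ Icc (-1 : ℝ) 0) (hx : x ∈ flatBall n 1)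
    (hx' : x' ∈ flatBall n 1) (hne : x ≠ x') {L L' : ℝ}
    (hL : NormalDerivLimit (1 - 2 * s) (u t) x L) (hL' : NormalDerivLimit (1 - 2 * s) (u t) x' L')
    (hmax : IsLocalMaxOn (fun y : ℝ => u t (x, y) - u t (x', y) -
      horizontalPenalty (fun z y => N * barrier s α z y) k xb yb (x, x', y)) (Ici 0) 0) :
    L - L' ≤ 2 * s * (-(N * (‖x - x'‖ / 2) ^ α) * (‖x - x'‖ ^ (2 * s))⁻¹) := by
  set z := ‖x - x'‖ / 2 with hz
  have hzpos : 0 < z := half_pos (norm_pos_iff.2 (sub_ne_zero.2 hne))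
  have hlim := tendsto_mul_rpow_inv_add_sqrt hs.le (by linarith) hzpos (-(N * z ^ α)) k
  rw [show 2 * z = ‖x - x'‖ by ring] at hlim
  refine conormal_limit_le (by positivity) (D := fun y => u t (x, y) - u t (x', y))
    ((tendsto_base_of_continuousOn h.continuousOn ht hx).sub
      (tendsto_base_of_continuousOn h.continuousOn ht hx')) ?_
    ((hL.sub hL').congr fun y => (mul_sub _ _ _).symm) ?_ hlim
  · filter_upwards [eventually_mk_mem_halfBall hx, eventually_mk_mem_halfBall hx'] with y hy hy'
    exact ((h.isAHarmonicOn t ht).hasDerivAt_vertical hy).fun_sub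
      ((h.isAHarmonicOn t ht).hasDerivAt_vertical hy')
  · filter_upwards [nhdsWithin_mono 0 Ioi_subset_Ici_self hmax, self_mem_nhdsWithin]
      with y hle (hy : 0 < y)
    have hsq : y ^ (2 * s) * y ^ (2 - 2 * s) = y ^ 2 := by
      rw [← Real.rpow_add hy]
      norm_num
    have hcorr : corrector s z y = y ^ (2 * s) * ((z + √(z ^ 2 + y ^ 2)) ^ (2 * s))⁻¹ := by
      rw [corrector, Real.div_rpow hy.le (by positivity), div_eq_mul_inv]
    simp only [horizontalPenalty, ← hz, barrier, corrector_zero_right hs, hcorr] at hle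
    linear_combination hle + 2 * mul_nonneg hk (mul_nonneg hy.le hyb) - k * hsq

end IsNormalizedSolution

lemma exists_hasDerivAt_norm_line {E : Type*} [NormedAddCommGroup E] [InnerProductSpace ℝ E]
    {v : E} (hv : v ≠ 0) (e : E) :
    ∃ c, HasDerivAt (fun σ : ℝ => ‖v + σ • e‖) c 0 ∧ |c| ≤ ‖e‖ := by
  have hdiff : DifferentiableAt ℝ (fun σ : ℝ => ‖v + σ • e‖) 0 :=
    DifferentiableAt.norm ℝ (by fun_prop) (by simpa using hv)
  have hlip : LipschitzWith ‖e‖₊ fun σ : ℝ => ‖v + σ • e‖ :=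
    .of_dist_le_mul fun σ τ => by
      have := abs_norm_sub_norm_le (v + σ • e) (v + τ • e)
      rwa [add_sub_add_left_eq_sub, ← sub_smul, norm_smul, mul_comm] at this
  exact ⟨_, hdiff.hasDerivAt, norm_deriv_le_of_lipschitz hlip⟩

lemma exists_hasDerivAt_norm_line_rpow {E : Type*} [NormedAddCommGroup E] [InnerProductSpace ℝ E]
    {v : E} (hv : v ≠ 0) (e : E) {α W : ℝ} (hα : 0 ≤ α) (hW : ‖e‖ ≤ W) :
    ∃ c, HasDerivAt (fun σ : ℝ => (‖v + σ • e‖ / 2) ^ α) c 0 ∧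
      -(α / 2 * ((‖v‖ / 2) ^ (α - 1) * W)) ≤ c := by
  obtain ⟨c, hc, hle⟩ := exists_hasDerivAt_norm_line hv e
  refine ⟨_, (hc.div_const 2).rpow_const (.inl (by simpa using hv)), ?_⟩
  have hcW := mul_le_mul_of_nonneg_left (neg_le_of_abs_le (hle.trans hW))
    (by positivity : 0 ≤ α / 2 * (‖v‖ / 2) ^ (α - 1))
  simp only [zero_smul, add_zero]
  linear_combination hcW

lemma exists_hasDerivAt_norm_line_sq {E : Type*} [NormedAddCommGroup E] [InnerProductSpace ℝ E]
    {v e : E} {ρ M : ℝ} (hρ : ‖v‖ ≤ ρ) (hM : ‖e‖ ≤ M) :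
    ∃ c, HasDerivAt (fun σ : ℝ => ‖v + σ • e‖ ^ 2) c 0 ∧ -(2 * ρ * M) ≤ c := by
  obtain ⟨g, hg, hg₁, -⟩ := hasSecondDerivAt_norm_add_smul_sq v e
  refine ⟨_, hg₁ ▸ hg.self_of_nhds, ?_⟩
  have hinner : |⟪v, e⟫| ≤ ρ * M := (abs_real_inner_le_norm v e).trans
    (mul_le_mul hρ hM (norm_nonneg e) ((norm_nonneg v).trans hρ))
  linarith [neg_le_of_abs_le hinner]

namespace IsNormalizedSolution

variable {n : ℕ} {s M N α k t tb yb : ℝ} {b : ℝ → En n → En n} {u : ℝ → En n × ℝ → ℝ}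
  {x x' xb : En n}

lemma characteristic_sub_ge (h : IsNormalizedSolution s M b u) (hs : 0 < s) (hα : 0 ≤ α)
    (hN : 0 ≤ N) (hk : 0 ≤ k) (ht : t ∈ Icc (-1 : ℝ) 0) (hx : x ∈ flatBall n 1)
    (hx' : x' ∈ flatBall n 1) (hne : x ≠ x') (hxb : ‖x - xb‖ ≤ 1 / 16) (hxb' : ‖x' - xb‖ ≤ 1 / 16)
    {c c' : ℝ} (hc : HasDerivWithinAt (fun σ : ℝ => u (t + σ) (x + σ • b t x, 0)) c (Iic 0) 0)
    (hc' : HasDerivWithinAt (fun σ : ℝ => u (t + σ) (x' + σ • b t x', 0)) c' (Iic 0) 0)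
    (hmax : IsLocalMaxOn (fun σ : ℝ => u (t + σ) (x + σ • b t x, 0) -
      u (t + σ) (x' + σ • b t x', 0) -
      (horizontalPenalty (fun z y => N * barrier s α z y) k xb yb
        (x + σ • b t x, x' + σ • b t x', 0) + k * (tb - (t + σ)))) (Iic 0) 0) :
    0 ≤ c - c' + 5 * N * (α / 2 * ((‖x - x'‖ / 2) ^ (α - 1) *
      (M * ‖x - x'‖ ^ (1 - 2 * s)))) + k * (M / 4 + 1) := by
  obtain ⟨d, hd, hdle⟩ := exists_hasDerivAt_norm_line_rpow (sub_ne_zero.2 hne) _ hα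
    (h.norm_drift_sub_le t ht x hx x' hx')
  obtain ⟨e, he, hele⟩ := exists_hasDerivAt_norm_line_sq hxb (h.norm_drift_le t ht x hx)
  obtain ⟨e', he', hele'⟩ := exists_hasDerivAt_norm_line_sq hxb' (h.norm_drift_le t ht x' hx')
  have htime : HasDerivAt (fun σ : ℝ => tb - (t + σ)) (-1) 0 := by
    simpa using ((hasDerivAt_id (0 : ℝ)).const_add t).const_sub tb
  have hpenalty := (hd.const_mul (5 * N)).fun_add
    (((he.fun_add he').add_const ((0 - yb) ^ 2)).fun_add htime |>.const_mul k)
  have hgap (σ : ℝ) : x + σ • b t x - (x' + σ • b t x') = x - x' + σ • (b t x - b t x') := by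
    module
  have hderiv := nonneg_of_hasDerivWithinAt_of_isLocalMaxOn_Iic
    ((hc.fun_sub hc').fun_sub hpenalty.hasDerivWithinAt) <| by
      convert hmax using 3 with σ
      rw [horizontalPenalty, barrier_zero_right hs, hgap]
      simp only [add_sub_right_comm _ _ xb]
      ring
  linear_combination hderiv + 5 * N * hdle + k * (hele + hele')

end IsNormalizedSolution

/-! ### Hölder estimate in the horizontal variables -/

lemma exists_isMaxOn_sub_of_pos {X : Type*} [TopologicalSpace X] {K : Set X} (hK : IsCompact K)
    {D Ψ : X → ℝ} (hD : ContinuousOn D K) (hΨ : ∀ q ∈ K, 0 ≤ Ψ q)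
    (hΨc : ∀ q ∈ K, 0 < D q → ContinuousWithinAt Ψ K q) {p : X} (hp : p ∈ K) (hpos : Ψ p < D p) :
    ∃ q ∈ K, Ψ q < D q ∧ IsMaxOn (fun q => D q - Ψ q) K q := by
  have hcompact : IsCompact (K ∩ D ⁻¹' Ici (D p - Ψ p)) := by
    obtain ⟨v, hv, heq⟩ := continuousOn_iff_isClosed.1 hD _ (isClosed_Ici (a := D p - Ψ p))
    rw [inter_comm, heq, inter_comm]
    exact hK.inter_right hv
  have hcont : ContinuousOn (fun q => D q - Ψ q) (K ∩ D ⁻¹' Ici (D p - Ψ p)) := fun q hq =>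
    ((hD q hq.1).sub (hΨc q hq.1 ((sub_pos.2 hpos).trans_le hq.2))).mono inter_subset_left
  have hpmem : p ∈ K ∩ D ⁻¹' Ici (D p - Ψ p) := ⟨hp, sub_le_self _ (hΨ p hp)⟩
  obtain ⟨q, hq, hmax⟩ := hcompact.exists_isMaxOn ⟨p, hpmem⟩ hcont
  have hqp : D p - Ψ p ≤ D q - Ψ q := hmax hpmem
  refine ⟨q, hq.1, by linarith, fun q' hq' => ?_⟩
  by_cases h : D p - Ψ p ≤ D q'
  · exact hmax ⟨hq', h⟩
  · exact ((sub_le_self _ (hΨ q' hq')).trans (not_le.1 h).le).trans hqp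

lemma mk_mem_halfBallWithBase_of_norm_sub_le {n : ℕ} {x xb : En n} {y : ℝ} (hxb : ‖xb‖ ≤ 9 / 16)
    (hx : ‖x - xb‖ ≤ 1 / 16) (hy : 0 ≤ y) (hy' : y ≤ 9 / 16) : (x, y) ∈ halfBallWithBase n 1 := by
  have hnorm : ‖x‖ ≤ 10 / 16 := by linarith [norm_le_norm_add_norm_sub' x xb]
  refine ⟨?_, hy⟩
  calc ‖x‖ ^ 2 + y ^ 2 ≤ (10 / 16) ^ 2 + (9 / 16) ^ 2 := by gcongr
    _ < 1 ^ 2 := by norm_num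

/-- The penalized difference `u (t, x, y) - u (t, x', y)` as a function of `q = (t, x, x', y)`. -/
def horizontalDefect {n : ℕ} (u : ℝ → En n × ℝ → ℝ) (s α N k tb yb : ℝ) (xb : En n)
    (q : ℝ × En n × En n × ℝ) : ℝ :=
  u q.1 (q.2.1, q.2.2.2) - u q.1 (q.2.2.1, q.2.2.2) -
    (horizontalPenalty (fun z y => N * barrier s α z y) k xb yb q.2 + k * (tb - q.1))

lemma rpow_sub_one_mul_rpow_one_sub {r α s : ℝ} (hr : 0 < r) :
    (r / 2) ^ (α - 1) * r ^ (1 - 2 * s) = 2 * ((r / 2) ^ α * (r ^ (2 * s))⁻¹) := by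
  rw [Real.rpow_sub_one (by positivity), Real.rpow_sub hr, Real.rpow_one]
  field_simp

lemma half_le_half_rpow_mul_inv_rpow {r α s : ℝ} (hr : 0 < r) (hr' : r ≤ 1) (hα : α ≤ 1)
    (hαs : α ≤ 2 * s) : 1 / 2 ≤ (r / 2) ^ α * (r ^ (2 * s))⁻¹ := by
  have hpow : r ^ (2 * s) ≤ r ^ α := Real.rpow_le_rpow_of_exponent_ge hr hr' hαs
  have htwo : (2 : ℝ) ^ α ≤ 2 := Real.rpow_le_self_of_one_le one_le_two hα
  rw [← div_eq_mul_inv, le_div_iff₀ (by positivity), Real.div_rpow hr.le two_pos.le,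
    le_div_iff₀ (by positivity)]
  calc 1 / 2 * r ^ (2 * s) * 2 ^ α ≤ 1 / 2 * r ^ α * 2 := by gcongr
    _ = r ^ α := by ring

namespace IsNormalizedSolution

variable {n : ℕ} {s M N α k t tb y yb : ℝ} {b : ℝ → En n → En n} {u : ℝ → En n × ℝ → ℝ}
  {x x' xb : En n}

lemma mul_le_of_isLocalMaxOn_horizontalDefect (h : IsNormalizedSolution s M b u) (hs : 0 < s)
    (hs' : s ≤ 1 / 2) (hα : 0 ≤ α) (hα' : α ≤ 1) (hαs : α ≤ 2 * s) (hαM : 5 * α * M ≤ s)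
    (hN : 0 ≤ N) (hk : 0 ≤ k) (hyb : 0 ≤ yb) (ht : t ∈ Ioc (-1 : ℝ) 0) (htb : t ≤ tb)
    (hx : x ∈ flatBall n 1) (hx' : x' ∈ flatBall n 1) (hne : x ≠ x')
    (hxb : ‖x - xb‖ ≤ 1 / 16) (hxb' : ‖x' - xb‖ ≤ 1 / 16)
    (hmax : IsLocalMaxOn (horizontalDefect u s α N k tb yb xb)
      {q | q.1 ≤ tb ∧ 0 ≤ q.2.2.2} (t, x, x', 0)) :
    s * N / 2 ≤ 2 + k * (M / 4 + 1) := by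
  have htI : t ∈ Icc (-1 : ℝ) 0 := Ioc_subset_Icc_self ht
  obtain ⟨L, c, hL, hc, hcL⟩ := h.exists_conormal t ht x hx
  obtain ⟨L', c', hL', hc', hcL'⟩ := h.exists_conormal t ht x' hx'
  have hmax_y : IsLocalMaxOn (fun y : ℝ => horizontalDefect u s α N k tb yb xb (t, x, x', y))
      (Ici 0) 0 :=
    hmax.comp_continuousOn (g := fun y : ℝ => (t, x, x', y)) (fun y hy => ⟨htb, hy⟩)
      (by fun_prop) self_mem_Ici
  have hmax_t : IsLocalMaxOn (fun σ : ℝ => horizontalDefect u s α N k tb yb xb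
      (t + σ, x + σ • b t x, x' + σ • b t x', 0)) (Iic 0) 0 :=
    IsLocalMaxOn.comp_continuousOn (s := Iic 0) (t := {q | q.1 ≤ tb ∧ 0 ≤ q.2.2.2})
      (f := horizontalDefect u s α N k tb yb xb)
      (g := fun σ : ℝ => (t + σ, x + σ • b t x, x' + σ • b t x', (0 : ℝ))) (by simpa using hmax)
      (fun σ hσ => ⟨(add_le_of_nonpos_right (mem_Iic.1 hσ)).trans htb, le_rfl⟩)
      (by fun_prop) self_mem_Iic
  have hnormal := h.conormal_sub_le (N := N) (α := α) (k := k) (xb := xb) hs hs' hk hyb htI hx hx'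
    hne hL hL' <| hmax_y.mono fun y (hy : _ ≤ _) => by
      simp only [horizontalDefect] at hy
      dsimp only
      linarith
  have hchar := h.characteristic_sub_ge hs hα hN hk htI hx hx' hne hxb hxb' hc hc' hmax_t
  have hr : 0 < ‖x - x'‖ := norm_pos_iff.2 (sub_ne_zero.2 hne)
  have hr' : ‖x - x'‖ ≤ 1 := by
    linarith [norm_sub_le_norm_sub_add_norm_sub x xb x', norm_sub_rev xb x']
  have hhalf := mul_le_mul_of_nonneg_left (half_le_half_rpow_mul_inv_rpow hr hr' hα' hαs)
    (mul_nonneg hs.le hN)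
  have hdrift := rpow_sub_one_mul_rpow_one_sub (α := α) (s := s) hr
  set P := (‖x - x'‖ / 2) ^ α * (‖x - x'‖ ^ (2 * s))⁻¹
  have habsorb : 5 * α * M * (N * P) ≤ s * (N * P) := by gcongr
  have hjump := abs_sub_le_iff.1 hcL
  have hjump' := abs_sub_le_iff.1 hcL'
  linear_combination hchar + hnormal + hhalf + habsorb + hjump.1 + hjump'.2 +
    5 / 2 * N * α * M * hdrift

end IsNormalizedSolution

/-- The region in which the maximum of `horizontalDefect` is sought. -/
def horizontalBox {n : ℕ} (tb yb : ℝ) (xb : En n) : Set (ℝ × En n × En n × ℝ) :=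
  Icc (-1) tb ×ˢ Metric.closedBall xb (1 / 16) ×ˢ Metric.closedBall xb (1 / 16) ×ˢ
    Icc 0 (yb + 1 / 16)

lemma isCompact_horizontalBox {n : ℕ} (tb yb : ℝ) (xb : En n) :
    IsCompact (horizontalBox tb yb xb) :=
  isCompact_Icc.prod ((isCompact_closedBall _ _).prod
    ((isCompact_closedBall _ _).prod isCompact_Icc))

section

variable {n : ℕ} {tb yb : ℝ} {xb : En n} {q : ℝ × En n × En n × ℝ}

lemma mem_halfBallWithBase_of_mem_horizontalBox (hyb : yb ≤ 1 / 2) (hxb : ‖xb‖ ≤ 9 / 16)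
    (hq : q ∈ horizontalBox tb yb xb) :
    (q.2.1, q.2.2.2) ∈ halfBallWithBase n 1 ∧ (q.2.2.1, q.2.2.2) ∈ halfBallWithBase n 1 := by
  obtain ⟨-, hx, hx', hy, hy'⟩ := hq
  rw [mem_closedBall_iff_norm] at hx hx'
  exact ⟨mk_mem_halfBallWithBase_of_norm_sub_le hxb hx hy (by linarith),
    mk_mem_halfBallWithBase_of_norm_sub_le hxb hx' hy (by linarith)⟩

lemma horizontalBox_mem_nhdsWithin (ht : -1 < q.1) (hx : ‖q.2.1 - xb‖ < 1 / 16)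
    (hx' : ‖q.2.2.1 - xb‖ < 1 / 16) (hy : q.2.2.2 < yb + 1 / 16) :
    horizontalBox tb yb xb ∈ 𝓝[{q | q.1 ≤ tb ∧ 0 ≤ q.2.2.2}] q := by
  have hopen : IsOpen (Ioi (-1 : ℝ) ×ˢ Metric.ball xb (1 / 16) ×ˢ Metric.ball xb (1 / 16) ×ˢ
      Iio (yb + 1 / 16)) :=
    isOpen_Ioi.prod (Metric.isOpen_ball.prod (Metric.isOpen_ball.prod isOpen_Iio))
  have hmem := hopen.mem_nhds (x := q)
    ⟨ht, mem_ball_iff_norm.2 hx, mem_ball_iff_norm.2 hx', hy⟩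
  filter_upwards [self_mem_nhdsWithin, mem_nhdsWithin_of_mem_nhds hmem] with p hp hp'
  exact ⟨⟨hp'.1.le, hp.1⟩, Metric.ball_subset_closedBall hp'.2.1,
    Metric.ball_subset_closedBall hp'.2.2.1, hp.2, hp'.2.2.2.le⟩

lemma continuousAt_horizontalPenalty_barrier {s : ℝ} (hs : 0 ≤ s) (α N k : ℝ)
    {q : En n × En n × ℝ} (hne : q.1 ≠ q.2.1) :
    ContinuousAt (horizontalPenalty (fun z y => N * barrier s α z y) k xb yb) q := by
  have hz : 0 < ‖q.1 - q.2.1‖ / 2 := half_pos (norm_pos_iff.2 (sub_ne_zero.2 hne))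
  have hbarrier := (continuousAt_barrier hs α hz q.2.2).comp_of_eq
    (f := fun q : En n × En n × ℝ => (‖q.1 - q.2.1‖ / 2, q.2.2)) (by fun_prop) rfl
  exact (hbarrier.const_mul N).add (by fun_prop)

lemma mul_le_horizontalPenalty_barrier {s N : ℝ} (hs : 0 ≤ s) (hN : 0 ≤ N) (α k : ℝ)
    {q : En n × En n × ℝ} (hy : 0 ≤ q.2.2) :
    k * (‖q.1 - xb‖ ^ 2 + ‖q.2.1 - xb‖ ^ 2 + (q.2.2 - yb) ^ 2) ≤
      horizontalPenalty (fun z y => N * barrier s α z y) k xb yb q :=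
  le_add_of_nonneg_left (mul_nonneg hN (barrier_nonneg hs (by positivity) hy))

end

namespace IsNormalizedSolution

variable {n : ℕ} {s M N α t tb yb : ℝ} {b : ℝ → En n → En n} {u : ℝ → En n × ℝ → ℝ}
  {x x' xb x₀ x₀' : En n}

lemma continuousOn_horizontal_sub (h : IsNormalizedSolution s M b u) (htb : tb ≤ 0)
    (hyb : yb ≤ 1 / 2) (hxb : ‖xb‖ ≤ 9 / 16) :
    ContinuousOn (fun q : ℝ × En n × En n × ℝ =>
      u q.1 (q.2.1, q.2.2.2) - u q.1 (q.2.2.1, q.2.2.2)) (horizontalBox tb yb xb) := by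
  refine .sub
    (h.continuousOn.comp (f := fun q : ℝ × En n × En n × ℝ => (q.1, (q.2.1, q.2.2.2)))
      (by fun_prop) fun q hq => ⟨⟨hq.1.1, hq.1.2.trans htb⟩, ?_⟩)
    (h.continuousOn.comp (f := fun q : ℝ × En n × En n × ℝ => (q.1, (q.2.2.1, q.2.2.2)))
      (by fun_prop) fun q hq => ⟨⟨hq.1.1, hq.1.2.trans htb⟩, ?_⟩)
  · exact halfBallWithBase_subset_closedHalfBall
      (mem_halfBallWithBase_of_mem_horizontalBox hyb hxb hq).1
  · exact halfBallWithBase_subset_closedHalfBall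
      (mem_halfBallWithBase_of_mem_horizontalBox hyb hxb hq).2

lemma exists_isMaxOn_horizontalDefect (h : IsNormalizedSolution s M b u) (hs : 0 ≤ s)
    (hN : 0 ≤ N) (htb : tb ≤ 0) (hyb : yb ≤ 1 / 2) (hxb : ‖xb‖ ≤ 9 / 16)
    (hmem : (tb, x₀, x₀', yb) ∈ horizontalBox tb yb xb)
    (hpos : 0 < horizontalDefect u s α N 512 tb yb xb (tb, x₀, x₀', yb)) :
    ∃ q ∈ horizontalBox tb yb xb, 0 < horizontalDefect u s α N 512 tb yb xb q ∧ q.2.1 ≠ q.2.2.1 ∧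
      IsMaxOn (horizontalDefect u s α N 512 tb yb xb) (horizontalBox tb yb xb) q := by
  set Ψ : ℝ × En n × En n × ℝ → ℝ := fun q =>
    horizontalPenalty (fun z y => N * barrier s α z y) 512 xb yb q.2 + 512 * (tb - q.1)
  have hΨ : ∀ q ∈ horizontalBox tb yb xb, 0 ≤ Ψ q := fun q hq =>
    add_nonneg (le_trans (by positivity)
      (mul_le_horizontalPenalty_barrier (xb := xb) (yb := yb) hs hN α 512 hq.2.2.2.1))
      (mul_nonneg (by norm_num) (sub_nonneg.2 hq.1.2))
  have hne : ∀ q : ℝ × En n × En n × ℝ,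
      0 < u q.1 (q.2.1, q.2.2.2) - u q.1 (q.2.2.1, q.2.2.2) → q.2.1 ≠ q.2.2.1 := by
    rintro q hq heq
    simp [heq] at hq
  have hΨc : ∀ q ∈ horizontalBox tb yb xb,
      0 < u q.1 (q.2.1, q.2.2.2) - u q.1 (q.2.2.1, q.2.2.2) →
      ContinuousWithinAt Ψ (horizontalBox tb yb xb) q := fun q _ hq =>
    (((continuousAt_horizontalPenalty_barrier hs α N 512 (hne q hq)).comp continuousAt_snd).add
      (by fun_prop)).continuousWithinAt
  obtain ⟨q, hq, hlt, hmax⟩ := exists_isMaxOn_sub_of_pos (isCompact_horizontalBox tb yb xb)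
    (h.continuousOn_horizontal_sub htb hyb hxb) hΨ hΨc hmem (sub_pos.1 hpos)
  exact ⟨q, hq, sub_pos.2 hlt, hne q ((hΨ q hq).trans_lt hlt), hmax⟩

/-- Since `|u| ≤ 1`, the penalty confines a positive maximum to the interior of the box. -/
lemma exists_isLocalMaxOn_horizontalDefect (h : IsNormalizedSolution s M b u) (hs : 0 ≤ s)
    (hN : 0 ≤ N) (htb : tb ∈ Icc (-1 / 2 : ℝ) 0) (hyb : yb ∈ Icc (0 : ℝ) (1 / 2))
    (hxb : ‖xb‖ ≤ 9 / 16) (hx₀ : ‖x₀ - xb‖ ≤ 1 / 16) (hx₀' : ‖x₀' - xb‖ ≤ 1 / 16)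
    (hpos : 0 < horizontalDefect u s α N 512 tb yb xb (tb, x₀, x₀', yb)) :
    ∃ t x x' y, t ∈ Ioc (-1 : ℝ) 0 ∧ t ≤ tb ∧ 0 ≤ y ∧ x ≠ x' ∧
      ‖x - xb‖ ≤ 1 / 16 ∧ ‖x' - xb‖ ≤ 1 / 16 ∧
      (x, y) ∈ halfBallWithBase n 1 ∧ (x', y) ∈ halfBallWithBase n 1 ∧
      IsLocalMaxOn (horizontalDefect u s α N 512 tb yb xb)
        {q | q.1 ≤ tb ∧ 0 ≤ q.2.2.2} (t, x, x', y) := by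
  have hmem : (tb, x₀, x₀', yb) ∈ horizontalBox tb yb xb :=
    ⟨⟨by linarith [htb.1], le_rfl⟩, mem_closedBall_iff_norm.2 hx₀,
      mem_closedBall_iff_norm.2 hx₀', hyb.1, by linarith⟩
  obtain ⟨⟨t, x, x', y⟩, hq, hq_pos, hne, hmax⟩ :=
    h.exists_isMaxOn_horizontalDefect hs hN htb.2 hyb.2 hxb hmem hpos
  obtain ⟨hxy, hxy'⟩ := mem_halfBallWithBase_of_mem_horizontalBox hyb.2 hxb hq
  obtain ⟨⟨ht, ht'⟩, hx, hx', hy, -⟩ := hq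
  rw [mem_closedBall_iff_norm] at hx hx'
  have htI : t ∈ Icc (-1 : ℝ) 0 := ⟨ht, ht'.trans htb.2⟩
  have hpenalty :=
    mul_le_horizontalPenalty_barrier (xb := xb) (yb := yb) hs hN α 512 (q := (x, x', y)) hy
  have hdiff := h.sub_le_two htI htI hxy hxy'
  simp only [horizontalDefect] at hq_pos hpenalty
  dsimp only at ht ht' hx hx' hy
  have ht_lt : -1 < t := by
    nlinarith [sq_nonneg ‖x - xb‖, sq_nonneg ‖x' - xb‖, sq_nonneg (y - yb), htb.1]
  have hx_lt : ‖x - xb‖ < 1 / 16 := lt_of_pow_lt_pow_left₀ 2 (by norm_num) <| by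
    nlinarith [sq_nonneg ‖x' - xb‖, sq_nonneg (y - yb)]
  have hx_lt' : ‖x' - xb‖ < 1 / 16 := lt_of_pow_lt_pow_left₀ 2 (by norm_num) <| by
    nlinarith [sq_nonneg ‖x - xb‖, sq_nonneg (y - yb)]
  have hy_lt : y - yb < 1 / 16 := lt_of_pow_lt_pow_left₀ 2 (by norm_num) <| by
    nlinarith [sq_nonneg ‖x - xb‖, sq_nonneg ‖x' - xb‖]
  exact ⟨t, x, x', y, ⟨ht_lt, htI.2⟩, ht', hy, hne, hx, hx', hxy, hxy',
    (hmax.filter_mono (le_principal_iff.2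
      (horizontalBox_mem_nhdsWithin ht_lt hx_lt hx_lt' (by dsimp only; linarith))))⟩

lemma mul_le_of_isLocalMaxOn_horizontalDefect_of_pos {k : ℝ} (h : IsNormalizedSolution s M b u)
    (hs : 0 ≤ s) (hs' : s ≤ 1 / 2) (hα : 0 < α) (hα' : α ≤ 1 / 4) (hN : 0 ≤ N) (hk : 0 ≤ k)
    {y : ℝ} (hyb : 0 ≤ yb) (ht : t ∈ Icc (-1 : ℝ) 0) (htb : t ≤ tb)
    (hx : (x, y) ∈ halfBall n 1) (hx' : (x', y) ∈ halfBall n 1) (hne : x ≠ x')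
    (hmax : IsLocalMaxOn (horizontalDefect u s α N k tb yb xb)
      {q | q.1 ≤ tb ∧ 0 ≤ q.2.2.2} (t, x, x', y)) :
    N * (α * (‖x - x'‖ / 2) ^ (α - 2)) ≤ k * (4 * n + 4) := by
  have hz : 0 < ‖x - x'‖ / 2 := half_pos (norm_pos_iff.2 (sub_ne_zero.2 hne))
  obtain ⟨c₁, c₂, g₁, g₂, hc, hg, hle⟩ := barrier_supersolution hs hs' hα hα' hz hx.2
  have hslice : IsLocalMax (fun q : En n × En n × ℝ =>
      horizontalDefect u s α N k tb yb xb (t, q)) (x, x', y) :=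
    (hmax.comp_continuousOn (s := {q : En n × En n × ℝ | 0 < q.2.2}) (g := fun q => (t, q))
      (fun q hq => ⟨htb, le_of_lt hq⟩) (by fun_prop) hx.2).isLocalMax
      ((isOpen_lt (by fun_prop) (by fun_prop)).mem_nhds hx.2)
  have hint := horizontal_doubling_interior (a := 1 - 2 * s) (by linarith) (by linarith) hk
    (h.isAHarmonicOn t ht) hyb hx hx' hne (hc.const_mul N) (hg.const_mul N)
    (hslice.mono fun q hq => by simp only [horizontalDefect] at hq; linarith)
  linear_combination hint + N * hle

lemma horizontalDefect_nonpos (h : IsNormalizedSolution s M b u) (hs : 0 < s)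
    (hs' : s ≤ 1 / 2) (hα : 0 < α) (hα' : α ≤ 1 / 4) (hαs : α ≤ 2 * s) (hαM : 5 * α * M ≤ s)
    (hN : 0 ≤ N) (hNα : 512 * (4 * n + 4) < N * α) (hNs : 2 + 512 * (M / 4 + 1) < s * N / 2)
    (htb : tb ∈ Icc (-1 / 2 : ℝ) 0) (hyb : yb ∈ Icc (0 : ℝ) (1 / 2)) (hxb : ‖xb‖ ≤ 9 / 16)
    (hx₀ : ‖x₀ - xb‖ ≤ 1 / 16) (hx₀' : ‖x₀' - xb‖ ≤ 1 / 16) :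
    horizontalDefect u s α N 512 tb yb xb (tb, x₀, x₀', yb) ≤ 0 := by
  by_contra! hpos
  obtain ⟨t, x, x', y, ht, httb, hy, hne, hx, hx', hxy, hxy', hmax⟩ :=
    h.exists_isLocalMaxOn_horizontalDefect hs.le hN htb hyb hxb hx₀ hx₀' hpos
  obtain hy | rfl := hy.lt_or_eq
  · have hle := h.mul_le_of_isLocalMaxOn_horizontalDefect_of_pos hs.le hs' hα hα' hN (by norm_num)
      hyb.1 (Ioc_subset_Icc_self ht) httb ⟨hxy.1, hy⟩ ⟨hxy'.1, hy⟩ hne hmax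
    have hr : ‖x - x'‖ / 2 ≤ 1 := by
      linarith [norm_sub_le_norm_sub_add_norm_sub x xb x', norm_sub_rev xb x']
    have hone : 1 ≤ (‖x - x'‖ / 2) ^ (α - 2) := Real.one_le_rpow_of_pos_of_le_one_of_nonpos
      (half_pos (norm_pos_iff.2 (sub_ne_zero.2 hne))) hr (by linarith)
    have : N * (α * 1) ≤ N * (α * (‖x - x'‖ / 2) ^ (α - 2)) := by gcongr
    linarith
  · have hle := h.mul_le_of_isLocalMaxOn_horizontalDefect hs hs' hα.le (by linarith) hαs hαM hN
      (by norm_num) hyb.1 ht httb (by simpa [flatBall, halfBallWithBase] using hxy)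
      (by simpa [flatBall, halfBallWithBase] using hxy') hne hx hx' hmax
    linarith

lemma abs_horizontal_sub_le {y : ℝ} (h : IsNormalizedSolution s M b u) (hs : 0 < s)
    (hs' : s ≤ 1 / 2) (hα : 0 < α) (hα' : α ≤ 1 / 4) (hαs : α ≤ 2 * s) (hαM : 5 * α * M ≤ s)
    (hN : 0 ≤ N) (hNα : 512 * (4 * n + 4) < N * α) (hNs : 2 + 512 * (M / 4 + 1) < s * N / 2)
    (ht : t ∈ Icc (-1 / 2 : ℝ) 0) (hxb : ‖xb‖ ≤ 9 / 16) (hx : ‖x - xb‖ ≤ 1 / 16)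
    (hy : y ∈ Icc (0 : ℝ) (1 / 2)) :
    |u t (x, y) - u t (xb, y)| ≤ (5 * N + 512) * ‖x - xb‖ ^ α := by
  have hxb' : ‖xb - xb‖ ≤ 1 / 16 := by simp
  have hle := h.horizontalDefect_nonpos hs hs' hα hα' hαs hαM hN hNα hNs ht hy hxb hx hxb'
  have hge := h.horizontalDefect_nonpos hs hs' hα hα' hαs hαM hN hNα hNs ht hy hxb hxb' hx
  simp only [horizontalDefect, horizontalPenalty, sub_self, norm_zero, norm_sub_rev xb x] at hle hge
  have hr : 0 ≤ ‖x - xb‖ := norm_nonneg _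
  have hbarrier : N * barrier s α (‖x - xb‖ / 2) y ≤ N * (5 * ‖x - xb‖ ^ α) := by
    refine mul_le_mul_of_nonneg_left ((barrier_le (by positivity) hy.1).trans ?_) hN
    gcongr
    linarith
  have hsq : ‖x - xb‖ ^ 2 ≤ ‖x - xb‖ ^ α := by
    rw [← Real.rpow_two]
    exact Real.rpow_le_rpow_of_exponent_ge' hr (by linarith) hα.le (by linarith)
  rw [abs_le]
  constructor <;> linarith

end IsNormalizedSolution

/-! ### Regularity in time and height over the base -/

/-- The barrier of the comparison argument in time and height, started at time `t₁` at `(xb, 0)`: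
supersolution in the interior because of `-(n + 1) y ^ 2` and at the base because of the last
summand; `y ^ (2 * s)` is in the kernel of the extension operator and restores positivity. -/
def timeBarrier {n : ℕ} (s M t₁ : ℝ) (xb : En n) (q : ℝ × En n × ℝ) : ℝ :=
  ‖q.2.1 - xb‖ ^ 2 + ((n + 2) * q.2.2 ^ (2 * s) - (n + 1) * q.2.2 ^ 2) + (n + 3 + M) * (q.1 - t₁)

section

variable {n : ℕ} {s M t₁ : ℝ} {xb : En n} {q : ℝ × En n × ℝ}

lemma norm_sq_add_sq_le_timeBarrier (hs : 0 ≤ s) (hs' : s ≤ 1) (hM : 0 ≤ M) (ht : t₁ ≤ q.1)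
    (hy : 0 ≤ q.2.2) (hy' : q.2.2 ≤ 1) :
    ‖q.2.1 - xb‖ ^ 2 + q.2.2 ^ 2 ≤ timeBarrier s M t₁ xb q := by
  have hpow : q.2.2 ^ 2 ≤ q.2.2 ^ (2 * s) := by
    rw [← Real.rpow_two]
    exact Real.rpow_le_rpow_of_exponent_ge' hy hy' (by positivity) (by linarith)
  have hn : ((n : ℝ) + 2) * q.2.2 ^ 2 ≤ (n + 2) * q.2.2 ^ (2 * s) := by gcongr
  have ht : 0 ≤ (n + 3 + M) * (q.1 - t₁) := mul_nonneg (by positivity) (sub_nonneg.2 ht)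
  rw [timeBarrier]
  linarith

lemma continuous_timeBarrier (hs : 0 ≤ s) (M t₁ : ℝ) (xb : En n) :
    Continuous (timeBarrier s M t₁ xb) := by
  have : Continuous fun q : ℝ × En n × ℝ => q.2.2 ^ (2 * s) :=
    (by fun_prop : Continuous fun q : ℝ × En n × ℝ => q.2.2).rpow_const
      fun _ => .inr (by positivity)
  unfold timeBarrier
  fun_prop

end

lemma IsAHarmonicOn.not_isLocalMax_sub_timeBarrier {n : ℕ} {s M t t₁ m y : ℝ}
    {w : En n × ℝ → ℝ} {x xb : En n} (hw : IsAHarmonicOn (1 - 2 * s) w (halfBall n 1))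
    (hs : s ≤ 1 / 2) (hm : 0 < m) (hx : (x, y) ∈ halfBall n 1) :
    ¬ IsLocalMax (fun p => w p - m * timeBarrier s M t₁ xb (t, p)) (x, y) := by
  intro hmax
  have hy : 0 < y := hx.2
  have hprofile := (((hasSecondDerivAt_rpow (2 * s) hy).const_mul (n + 2 : ℝ)).sub
    ((hasSecondDerivAt_sub_sq 0 y).const_mul (n + 1 : ℝ))).const_mul m
  have hint := one_point_interior (m := m) (xb := xb) hw hx hprofile
    (hmax.mono fun p hp => by
      simp only [timeBarrier] at hp
      simp only [sub_zero]
      linarith)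
  have hy_pow : y ^ (2 * s - 1) = y * y ^ (2 * s - 2) := by
    rw [show 2 * s - 1 = 2 * s - 2 + 1 by ring, Real.rpow_add_one hy.ne', mul_comm]
  rw [hy_pow] at hint
  field_simp at hint
  nlinarith [mul_nonneg hm.le (mul_nonneg (by positivity : (0 : ℝ) ≤ n + 1) (sub_nonneg.2 hs))]

lemma rpow_le_rpow_add_div_sq {α d ε : ℝ} (hα : 0 ≤ α) (hε : 0 < ε) (hd : 0 ≤ d) (hd' : d ≤ 1) :
    d ^ α ≤ ε ^ α + (d / ε) ^ 2 := by
  obtain h | h := le_total d ε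
  · exact (Real.rpow_le_rpow hd h hα).trans (le_add_of_nonneg_right (sq_nonneg _))
  · have hone : 1 ≤ (d / ε) ^ 2 := one_le_pow₀ ((one_le_div hε).2 h)
    exact (Real.rpow_le_one hd hd' hα).trans (hone.trans (le_add_of_nonneg_left (by positivity)))

namespace IsNormalizedSolution

variable {n : ℕ} {s M m t t₁ t₂ : ℝ} {b : ℝ → En n → En n} {u : ℝ → En n × ℝ → ℝ}
  {x xb : En n}

lemma drift_bound_nonneg (h : IsNormalizedSolution s M b u) : 0 ≤ M :=
  (norm_nonneg _).trans (h.norm_drift_le 0 (by simp) 0 (by simp [flatBall]))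

lemma conormal_le_of_isLocalMaxOn_sub_timeBarrier {L : ℝ} (h : IsNormalizedSolution s M b u)
    (hs : 0 < s) (hm : 0 ≤ m) (ht : t ∈ Icc (-1 : ℝ) 0) (hx : x ∈ flatBall n 1)
    (hL : NormalDerivLimit (1 - 2 * s) (u t) x L)
    (hmax : IsLocalMaxOn (fun y => u t (x, y) - m * timeBarrier s M t₁ xb (t, x, y)) (Ici 0) 0) :
    L ≤ 2 * s * (m * (n + 2)) := by
  refine conormal_limit_le (D := fun y => u t (x, y)) (by positivity)
    (tendsto_base_of_continuousOn h.continuousOn ht hx) ?_ hL ?_ tendsto_const_nhds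
  · filter_upwards [eventually_mk_mem_halfBall hx] with y hy
    exact (h.isAHarmonicOn t ht).hasDerivAt_vertical hy
  · filter_upwards [hmax.filter_mono (nhdsWithin_mono _ Ioi_subset_Ici_self)] with y hy
    simp only [timeBarrier, Real.zero_rpow (by positivity : 2 * s ≠ 0)] at hy
    have : 0 ≤ m * ((n + 1) * y ^ 2) := by positivity
    linarith

lemma characteristic_ge_of_isLocalMaxOn_sub_timeBarrier {c : ℝ}
    (h : IsNormalizedSolution s M b u) (hs : 0 < s) (hm : 0 ≤ m) (ht : t ∈ Icc (-1 : ℝ) 0)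
    (hx : x ∈ flatBall n 1) (hxb : ‖x - xb‖ ≤ 1 / 16)
    (hc : HasDerivWithinAt (fun σ : ℝ => u (t + σ) (x + σ • b t x, 0)) c (Iic 0) 0)
    (hmax : IsLocalMaxOn (fun σ : ℝ => u (t + σ) (x + σ • b t x, 0) -
      m * timeBarrier s M t₁ xb (t + σ, x + σ • b t x, 0)) (Iic 0) 0) :
    m * (n + 3) ≤ c := by
  obtain ⟨d, hd, hdM⟩ := exists_hasDerivAt_norm_line_sq hxb (h.norm_drift_le t ht x hx)
  have htime : HasDerivAt (fun σ : ℝ => (n + 3 + M) * (t + σ - t₁)) (n + 3 + M) 0 := by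
    simpa using (((hasDerivAt_id (0 : ℝ)).const_add t).sub_const t₁).const_mul (n + 3 + M)
  have hderiv := hc.sub ((hd.add htime).const_mul m).hasDerivWithinAt
  have hnonneg := nonneg_of_hasDerivWithinAt_of_isLocalMaxOn_Iic hderiv <|
    hmax.congr (.of_forall fun σ => by
      simp [timeBarrier, Real.zero_rpow (by positivity : 2 * s ≠ 0), add_sub_right_comm]) (by simp)
  nlinarith [h.drift_bound_nonneg]

lemma le_one_of_isLocalMaxOn_sub_timeBarrier (h : IsNormalizedSolution s M b u) (hs : 0 < s)
    (hs' : s ≤ 1 / 2) (hm : 0 ≤ m) (ht : t ∈ Ioc (-1 : ℝ) 0) (ht₁ : t₁ < t) (ht₂ : t ≤ t₂)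
    (hx : x ∈ flatBall n 1) (hxb : ‖x - xb‖ ≤ 1 / 16)
    (hmax : IsLocalMaxOn (fun q : ℝ × En n × ℝ => u q.1 q.2 - m * timeBarrier s M t₁ xb q)
      (Icc t₁ t₂ ×ˢ univ ×ˢ Ici 0) (t, x, 0)) :
    m ≤ 1 := by
  obtain ⟨L, c, hL, hc, hcL⟩ := h.exists_conormal t ht x hx
  have hmax_y := hmax.comp_continuousOn (s := Ici 0) (g := fun y : ℝ => (t, x, y))
    (fun y hy => ⟨⟨ht₁.le, ht₂⟩, mem_univ _, hy⟩) (by fun_prop) self_mem_Ici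
  have hmax_t := IsLocalMaxOn.comp_continuousOn (s := Icc (t₁ - t) 0)
    (t := Icc t₁ t₂ ×ˢ univ ×ˢ Ici 0)
    (f := fun q : ℝ × En n × ℝ => u q.1 q.2 - m * timeBarrier s M t₁ xb q)
    (g := fun σ : ℝ => (t + σ, x + σ • b t x, (0 : ℝ))) (b := 0) (by simpa using hmax)
    (fun σ hσ => ⟨⟨by linarith [hσ.1], by linarith [hσ.2]⟩, mem_univ _, self_mem_Ici⟩)
    (by fun_prop) (right_mem_Icc.2 (sub_neg.2 ht₁).le)
  rw [IsLocalMaxOn, nhdsWithin_Icc_eq_nhdsLE (sub_neg.2 ht₁)] at hmax_t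
  have htI := Ioc_subset_Icc_self ht
  have hnormal := h.conormal_le_of_isLocalMaxOn_sub_timeBarrier hs hm htI hx hL hmax_y
  have hchar := h.characteristic_ge_of_isLocalMaxOn_sub_timeBarrier hs hm htI hx hxb hc hmax_t
  have : 2 * s * (m * (n + 2)) ≤ 1 * (m * (n + 2)) := by
    gcongr
    linarith
  linarith [(abs_le.1 hcL).2]

/-- Since `|u| ≤ 1`, a maximum above an initial value of `u` lies in the interior of the box. -/
lemma exists_isLocalMaxOn_sub_timeBarrier {x₀ : En n} {y₀ : ℝ} (h : IsNormalizedSolution s M b u)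
    (hs : 0 ≤ s) (hs' : s ≤ 1 / 2) (hm : 512 ≤ m) (ht₁ : -1 ≤ t₁) (ht₂ : t₂ ≤ 0) (ht : t₁ ≤ t₂)
    (hxb : ‖xb‖ ≤ 9 / 16) (hx₀ : ‖x₀ - xb‖ ≤ 1 / 16) (hy₀ : y₀ ∈ Icc (0 : ℝ) (1 / 16))
    (hlt : u t₁ (xb, 0) < u t₂ (x₀, y₀) - m * timeBarrier s M t₁ xb (t₂, x₀, y₀)) :
    ∃ t x y, t ∈ Icc t₁ t₂ ∧ 0 ≤ y ∧ ‖x - xb‖ ≤ 1 / 16 ∧ (x, y) ∈ halfBallWithBase n 1 ∧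
      u t₂ (x₀, y₀) - m * timeBarrier s M t₁ xb (t₂, x₀, y₀) ≤
        u t (x, y) - m * timeBarrier s M t₁ xb (t, x, y) ∧
      IsLocalMaxOn (fun q : ℝ × En n × ℝ => u q.1 q.2 - m * timeBarrier s M t₁ xb q)
        (Icc t₁ t₂ ×ˢ univ ×ˢ Ici 0) (t, x, y) := by
  set K : Set (ℝ × En n × ℝ) := Icc t₁ t₂ ×ˢ Metric.closedBall xb (1 / 16) ×ˢ Icc 0 (1 / 16)
  have hK : ∀ q ∈ K, q.1 ∈ Icc (-1 : ℝ) 0 ∧ q.2 ∈ halfBallWithBase n 1 :=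
    fun q ⟨ht, hx, hy⟩ => ⟨⟨ht₁.trans ht.1, ht.2.trans ht₂⟩,
      mk_mem_halfBallWithBase_of_norm_sub_le hxb (mem_closedBall_iff_norm.1 hx) hy.1
        (hy.2.trans (by norm_num))⟩
  have hcont : ContinuousOn (fun q : ℝ × En n × ℝ => u q.1 q.2 - m * timeBarrier s M t₁ xb q) K :=
    (h.continuousOn.mono fun q hq =>
      ⟨(hK q hq).1, halfBallWithBase_subset_closedHalfBall (hK q hq).2⟩).sub
      ((continuous_timeBarrier hs M t₁ xb).const_mul m).continuousOn
  have hmem : (t₂, x₀, y₀) ∈ K := ⟨right_mem_Icc.2 ht, mem_closedBall_iff_norm.2 hx₀, hy₀⟩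
  obtain ⟨⟨t, x, y⟩, hq, hmax⟩ := (isCompact_Icc.prod
    ((isCompact_closedBall _ _).prod isCompact_Icc)).exists_isMaxOn ⟨_, hmem⟩ hcont
  obtain ⟨htI, hxy⟩ := hK _ hq
  have hle : u t₂ (x₀, y₀) - m * timeBarrier s M t₁ xb (t₂, x₀, y₀) ≤
      u t (x, y) - m * timeBarrier s M t₁ xb (t, x, y) := hmax hmem
  have hbarrier := norm_sq_add_sq_le_timeBarrier (xb := xb) hs (by linarith)
    h.drift_bound_nonneg hq.1.1 hq.2.2.1 (hq.2.2.2.trans (by norm_num))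
  have hdiff := h.sub_le_two htI ⟨ht₁, ht.trans ht₂⟩ hxy
    (mk_mem_halfBallWithBase_of_norm_sub_le (x := xb) hxb (by simp) le_rfl (by norm_num))
  dsimp only at hle hbarrier htI hdiff
  have hsq : ‖x - xb‖ ^ 2 + y ^ 2 < (1 / 16) ^ 2 := by nlinarith [sq_nonneg ‖x - xb‖, sq_nonneg y]
  have hx_lt : ‖x - xb‖ < 1 / 16 :=
    lt_of_pow_lt_pow_left₀ 2 (by norm_num) (by linarith [sq_nonneg y])
  have hy_lt : y < 1 / 16 :=
    lt_of_pow_lt_pow_left₀ 2 (by norm_num) (by linarith [sq_nonneg ‖x - xb‖])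
  refine ⟨t, x, y, hq.1, hq.2.2.1, hx_lt.le, hxy, hle, hmax.filter_mono (le_principal_iff.2 ?_)⟩
  have hopen := (Metric.isOpen_ball.prod isOpen_Iio).mem_nhds (x := (x, y))
    ⟨mem_ball_iff_norm.2 hx_lt, mem_Iio.2 hy_lt⟩
  filter_upwards [self_mem_nhdsWithin, mem_nhdsWithin_of_mem_nhds
    (continuous_snd.continuousAt.preimage_mem_nhds hopen)] with q hS hball
  exact ⟨hS.1, Metric.ball_subset_closedBall hball.1, hS.2.2, le_of_lt hball.2⟩

lemma le_add_mul_timeBarrier {A y : ℝ} (h : IsNormalizedSolution s M b u) (hs : 0 < s)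
    (hs' : s ≤ 1 / 2) (hm : 512 ≤ m) (ht₁ : -1 ≤ t₁) (ht₂ : t₂ ≤ 0) (ht : t₁ ≤ t₂)
    (hxb : ‖xb‖ ≤ 9 / 16) (hx : ‖x - xb‖ ≤ 1 / 16) (hy : y ∈ Icc (0 : ℝ) (1 / 16))
    (hA : ∀ z, ‖z - xb‖ ≤ 1 / 16 → u t₁ (z, 0) ≤ A + m * ‖z - xb‖ ^ 2) :
    u t₂ (x, y) ≤ A + m * timeBarrier s M t₁ xb (t₂, x, y) := by
  by_contra! hlt
  have hA₀ : u t₁ (xb, 0) ≤ A := by simpa using hA xb (by simp)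
  obtain ⟨t, z, η, htt, hη, hz, hzη, hle, hmax⟩ := h.exists_isLocalMaxOn_sub_timeBarrier hs.le hs'
    hm ht₁ ht₂ ht hxb hx hy (by linarith)
  have htI : t ∈ Icc (-1 : ℝ) 0 := ⟨ht₁.trans htt.1, htt.2.trans ht₂⟩
  obtain hη | rfl := hη.lt_or_eq
  · refine (h.isAHarmonicOn t htI).not_isLocalMax_sub_timeBarrier hs' (by linarith) ⟨hzη.1, hη⟩
      ((hmax.comp_continuousOn (s := {p : En n × ℝ | 0 < p.2}) (g := fun p => (t, p))
        (fun p (hp : 0 < p.2) => ⟨htt, mem_univ _, hp.le⟩) (by fun_prop) hη).isLocalMax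
        ((isOpen_lt (by fun_prop) (by fun_prop)).mem_nhds hη))
  obtain ht_lt | rfl := htt.1.lt_or_eq
  · linarith [h.le_one_of_isLocalMaxOn_sub_timeBarrier hs hs' (by linarith)
      ⟨ht₁.trans_lt ht_lt, htI.2⟩ ht_lt htt.2 (by simpa [flatBall, halfBallWithBase] using hzη)
      hz hmax]
  · have hinit := hA z hz
    have hbarrier := norm_sq_add_sq_le_timeBarrier (M := M) (xb := xb) (q := (t₁, z, 0)) hs.le
      (by linarith) h.drift_bound_nonneg le_rfl le_rfl zero_le_one
    dsimp only at hbarrier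
    nlinarith

lemma sub_base_le_of_scale {C α ε y : ℝ} (h : IsNormalizedSolution s M b u) (hs : 0 < s)
    (hs' : s ≤ 1 / 2) (hα : 0 ≤ α) (hC : 0 ≤ C) (hε : 0 < ε) (hε' : ε ≤ 1) (ht₁ : -1 ≤ t₁)
    (ht₂ : t₂ ≤ 0) (ht : t₁ ≤ t₂) (hxb : ‖xb‖ ≤ 9 / 16) (hy : y ∈ Icc (0 : ℝ) (1 / 16))
    (hH : ∀ x, ‖x - xb‖ ≤ 1 / 16 → u t₁ (x, 0) - u t₁ (xb, 0) ≤ C * ‖x - xb‖ ^ α) :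
    u t₂ (xb, y) - u t₁ (xb, 0) ≤
      C * ε ^ α + (C + 512) / ε ^ 2 * ((n + 3 + M) * (y ^ (2 * s) + (t₂ - t₁))) := by
  have hM := h.drift_bound_nonneg
  have hm : 512 ≤ (C + 512) / ε ^ 2 := by
    rw [le_div_iff₀ (by positivity)]
    nlinarith [pow_le_one₀ hε.le hε' (n := 2)]
  have hA : ∀ x, ‖x - xb‖ ≤ 1 / 16 →
      u t₁ (x, 0) ≤ u t₁ (xb, 0) + C * ε ^ α + (C + 512) / ε ^ 2 * ‖x - xb‖ ^ 2 := by
    intro x hx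
    have hsplit := mul_le_mul_of_nonneg_left
      (rpow_le_rpow_add_div_sq hα hε (norm_nonneg (x - xb)) (hx.trans (by norm_num))) hC
    have : C / ε ^ 2 * ‖x - xb‖ ^ 2 ≤ (C + 512) / ε ^ 2 * ‖x - xb‖ ^ 2 := by
      gcongr
      linarith
    rw [mul_add, div_pow, mul_div_assoc', mul_div_right_comm] at hsplit
    linarith [hH x hx]
  have hbound := h.le_add_mul_timeBarrier hs hs' hm ht₁ ht₂ ht hxb (x := xb) (by simp) hy hA
  have hbarrier : timeBarrier s M t₁ xb (t₂, xb, y) ≤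
      (n + 3 + M) * (y ^ (2 * s) + (t₂ - t₁)) := by
    have : 0 ≤ (1 + M) * y ^ (2 * s) := mul_nonneg (by positivity) (Real.rpow_nonneg hy.1 _)
    have : 0 ≤ ((n : ℝ) + 1) * y ^ 2 := by positivity
    simp only [timeBarrier, sub_self, norm_zero]
    linarith
  have : (C + 512) / ε ^ 2 * timeBarrier s M t₁ xb (t₂, xb, y) ≤
      (C + 512) / ε ^ 2 * ((n + 3 + M) * (y ^ (2 * s) + (t₂ - t₁))) := by gcongr
  linarith

lemma sub_base_le {C α y : ℝ} (h : IsNormalizedSolution s M b u) (hs : 0 < s)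
    (hs' : s ≤ 1 / 2) (hα : 0 < α) (hα' : α ≤ 2) (hC : 0 ≤ C) (ht₁ : -1 ≤ t₁)
    (ht₂ : t₂ ≤ 0) (ht : t₁ ≤ t₂) (hxb : ‖xb‖ ≤ 9 / 16) (hy : y ∈ Icc (0 : ℝ) (1 / 16))
    (hH : ∀ x, ‖x - xb‖ ≤ 1 / 16 → u t₁ (x, 0) - u t₁ (xb, 0) ≤ C * ‖x - xb‖ ^ α) :
    u t₂ (xb, y) - u t₁ (xb, 0) ≤
      (C + (C + 512) * (n + 3 + M)) * (y ^ (2 * s) + (t₂ - t₁)) ^ (α / 4) := by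
  have hM := h.drift_bound_nonneg
  have hy_pow : 0 ≤ y ^ (2 * s) := Real.rpow_nonneg hy.1 _
  obtain hσ | hσ := (add_nonneg hy_pow (sub_nonneg.2 ht)).eq_or_lt
  · have hy_zero : y ^ (2 * s) = 0 := le_antisymm (by linarith) hy_pow
    obtain rfl : y = 0 := (Real.rpow_eq_zero hy.1 (by positivity)).1 hy_zero
    obtain rfl : t₁ = t₂ := by linarith
    rw [← hσ, sub_self, Real.zero_rpow (by positivity), mul_zero]
  set σ := y ^ (2 * s) + (t₂ - t₁)
  obtain hσ' | hσ' := le_total σ 1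
  · have hscale := h.sub_base_le_of_scale hs hs' hα.le hC (Real.rpow_pos_of_pos hσ (1 / 4))
      (Real.rpow_le_one hσ.le hσ' (by norm_num)) ht₁ ht₂ ht hxb hy hH
    have hsq : (σ ^ (1 / 4 : ℝ)) ^ 2 = σ ^ (1 / 2 : ℝ) := by
      rw [← Real.rpow_mul_natCast hσ.le]
      norm_num
    have hdiv : σ / σ ^ (1 / 2 : ℝ) ≤ σ ^ (α / 4) := by
      rw [← Real.rpow_one_sub' hσ.le (by norm_num)]
      exact Real.rpow_le_rpow_of_exponent_ge hσ hσ' (by linarith)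
    rw [hsq, ← Real.rpow_mul hσ.le, one_div_mul_eq_div] at hscale
    have := mul_le_mul_of_nonneg_left hdiv (by positivity : 0 ≤ (C + 512) * (n + 3 + M))
    linear_combination hscale + this
  · have hone : 1 ≤ σ ^ (α / 4) := Real.one_le_rpow hσ' (by positivity)
    have hdiff := h.sub_le_two ⟨ht₁.trans ht, ht₂⟩ ⟨ht₁, ht.trans ht₂⟩
      (mk_mem_halfBallWithBase_of_norm_sub_le (x := xb) hxb (by simp) hy.1
        (hy.2.trans (by norm_num)))
      (mk_mem_halfBallWithBase_of_norm_sub_le (x := xb) hxb (by simp) le_rfl (by norm_num))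
    have hn : (0 : ℝ) ≤ n := n.cast_nonneg
    nlinarith [mul_nonneg hC (by positivity : 0 ≤ n + 3 + M), hn]

end IsNormalizedSolution

/-! ### Hölder estimate in height -/

/-- The increment in height of `w`, minus the modulus `φ` and a penalty centred at `(xb, yb)`, as a
function of `q = (x, y, y')`. -/
def verticalDefect {n : ℕ} (w : En n × ℝ → ℝ) (φ : ℝ → ℝ) (k : ℝ) (xb : En n) (yb : ℝ)
    (q : En n × ℝ × ℝ) : ℝ :=
  w (q.1, q.2.1) - w (q.1, q.2.2) - verticalPenalty φ k xb yb q

/-- The region in which the maximum of `verticalDefect` is sought. -/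
def verticalBox {n : ℕ} (xb : En n) (yb : ℝ) : Set (En n × ℝ × ℝ) :=
  Metric.closedBall xb (1 / 16) ×ˢ Icc 0 (yb + 1 / 16) ×ˢ Icc 0 (yb + 1 / 16) ∩
    {q | q.2.2 ≤ q.2.1}

lemma isCompact_verticalBox {n : ℕ} (xb : En n) (yb : ℝ) : IsCompact (verticalBox xb yb) :=
  ((isCompact_closedBall _ _).prod (isCompact_Icc.prod isCompact_Icc)).inter_right
    (isClosed_le (by fun_prop) (by fun_prop))

lemma verticalBox_mem_nhds {n : ℕ} {xb : En n} {yb : ℝ} {q : En n × ℝ × ℝ}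
    (hx : ‖q.1 - xb‖ < 1 / 16) (hy' : 0 < q.2.2) (hyy : q.2.2 < q.2.1)
    (hy : q.2.1 < yb + 1 / 16) : verticalBox xb yb ∈ 𝓝 q := by
  have hopen : IsOpen (Metric.ball xb (1 / 16) ×ˢ Iio (yb + 1 / 16) ×ˢ Ioi (0 : ℝ) ∩
      {q | q.2.2 < q.2.1}) :=
    (Metric.isOpen_ball.prod (isOpen_Iio.prod isOpen_Ioi)).inter
      (isOpen_lt (by fun_prop) (by fun_prop))
  filter_upwards [hopen.mem_nhds ⟨⟨mem_ball_iff_norm.2 hx, hy, hy'⟩, hyy⟩] with p hp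
  obtain ⟨⟨hpx, hpy, hpy'⟩, hpyy⟩ := hp
  have hlt : p.2.2 < p.2.1 := hpyy
  exact ⟨⟨Metric.ball_subset_closedBall hpx, ⟨(hpy'.trans hlt).le, hpy.le⟩,
    hpy'.le, (hlt.trans hpy).le⟩, hlt.le⟩

namespace IsNormalizedSolution

variable {n : ℕ} {s M N t β k yb yb' : ℝ} {b : ℝ → En n → En n} {u : ℝ → En n × ℝ → ℝ}
  {xb : En n}

lemma exists_isMaxOn_verticalDefect {φ : ℝ → ℝ} (h : IsNormalizedSolution s M b u)
    (hφ : Continuous φ) (ht : t ∈ Icc (-1 : ℝ) 0) (hxb : ‖xb‖ ≤ 9 / 16) (hyb : yb ≤ 1 / 2)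
    (hne : (verticalBox xb yb).Nonempty) :
    ∃ q ∈ verticalBox xb yb, (q.1, q.2.1) ∈ halfBallWithBase n 1 ∧
      (q.1, q.2.2) ∈ halfBallWithBase n 1 ∧
      IsMaxOn (verticalDefect (u t) φ k xb yb) (verticalBox xb yb) q := by
  have hball : ∀ q ∈ verticalBox xb yb, (q.1, q.2.1) ∈ halfBallWithBase n 1 ∧
      (q.1, q.2.2) ∈ halfBallWithBase n 1 := by
    rintro q ⟨⟨hx, ⟨hy, hy_le⟩, hy', hy_le'⟩, -⟩
    rw [mem_closedBall_iff_norm] at hx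
    exact ⟨mk_mem_halfBallWithBase_of_norm_sub_le hxb hx hy (by linarith),
      mk_mem_halfBallWithBase_of_norm_sub_le hxb hx hy' (by linarith)⟩
  have hpenalty : Continuous (verticalPenalty φ k xb yb) := by
    unfold verticalPenalty
    fun_prop
  have hcont : ContinuousOn (verticalDefect (u t) φ k xb yb) (verticalBox xb yb) :=
    ((h.continuousOn.comp (f := fun q : En n × ℝ × ℝ => (t, (q.1, q.2.1))) (by fun_prop)
      fun q hq => ⟨ht, halfBallWithBase_subset_closedHalfBall (hball q hq).1⟩).sub
    (h.continuousOn.comp (f := fun q : En n × ℝ × ℝ => (t, (q.1, q.2.2))) (by fun_prop)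
      fun q hq => ⟨ht, halfBallWithBase_subset_closedHalfBall (hball q hq).2⟩)).sub
    hpenalty.continuousOn
  obtain ⟨q, hq, hmax⟩ := (isCompact_verticalBox xb yb).exists_isMaxOn hne hcont
  exact ⟨q, hq, (hball q hq).1, (hball q hq).2, hmax⟩

/-- Since `|u| ≤ 1`, the penalty confines a positive maximum to the interior of the box. -/
lemma exists_isLocalMax_verticalDefect (h : IsNormalizedSolution s M b u) (hβ : 0 < β)
    (hN : 0 ≤ N) (ht : t ∈ Icc (-1 : ℝ) 0) (hxb : ‖xb‖ ≤ 9 / 16) (hyb : yb ≤ 1 / 2)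
    (hyb' : 0 ≤ yb') (hyy : yb' ≤ yb)
    (hH : ∀ x, ‖x - xb‖ ≤ 1 / 16 → ∀ y ∈ Icc (0 : ℝ) (9 / 16),
      u t (x, y) - u t (x, 0) ≤ N * y ^ β)
    (hpos : 0 < verticalDefect (u t) (fun z => N * z ^ β) 512 xb yb (xb, yb, yb')) :
    ∃ x y y', (x, y) ∈ halfBall n 1 ∧ (x, y') ∈ halfBall n 1 ∧ y' < y ∧ y ≤ 1 ∧
      IsLocalMax (verticalDefect (u t) (fun z => N * z ^ β) 512 xb yb) (x, y, y') := by
  have hmem : (xb, yb, yb') ∈ verticalBox xb yb :=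
    ⟨⟨Metric.mem_closedBall_self (by norm_num), ⟨hyb'.trans hyy, by simp⟩, hyb', by linarith⟩, hyy⟩
  obtain ⟨⟨x, y, y'⟩, hq, hxy, hxy', hmax⟩ := h.exists_isMaxOn_verticalDefect
    ((Real.continuous_rpow_const hβ.le).const_mul N) ht hxb hyb ⟨_, hmem⟩ (k := 512)
  have hq_pos : 0 < verticalDefect (u t) (fun z => N * z ^ β) 512 xb yb (x, y, y') :=
    hpos.trans_le (hmax hmem)
  obtain ⟨⟨hx, ⟨-, hy⟩, hy', -⟩, hyy'⟩ := hq
  rw [mem_closedBall_iff_norm] at hx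
  have hdiff := h.sub_le_two ht ht hxy hxy'
  simp only [verticalDefect, verticalPenalty] at hq_pos
  dsimp only [mem_ofPred_eq] at hx hy' hyy' hy
  have hpow : 0 ≤ N * (y - y') ^ β := mul_nonneg hN (Real.rpow_nonneg (sub_nonneg.2 hyy') β)
  have hx_lt : ‖x - xb‖ < 1 / 16 := lt_of_pow_lt_pow_left₀ 2 (by norm_num) <| by
    nlinarith [sq_nonneg (y - yb)]
  have hy_lt : y - yb < 1 / 16 := lt_of_pow_lt_pow_left₀ 2 (by norm_num) <| by
    nlinarith [sq_nonneg ‖x - xb‖]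
  have hpenalty : 0 ≤ 512 * (‖x - xb‖ ^ 2 + (y - yb) ^ 2) := by positivity
  have hyy_lt : y' < y := hyy'.lt_of_ne <| by
    rintro rfl
    linarith
  have hy_pos : 0 < y' := hy'.lt_of_ne <| by
    rintro rfl
    rw [sub_zero] at hq_pos
    linarith [hH x hx y ⟨hyy', by linarith⟩]
  exact ⟨x, y, y', ⟨hxy.1, hy_pos.trans hyy_lt⟩, ⟨hxy'.1, hy_pos⟩, hyy_lt, by linarith,
    hmax.isLocalMax (verticalBox_mem_nhds hx_lt hy_pos hyy_lt (by dsimp only; linarith))⟩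

lemma vertical_sub_le (h : IsNormalizedSolution s M b u) (hs : 0 ≤ s) (hs' : s ≤ 1 / 2)
    (hβ : 0 < β) (hβ' : β ≤ 1 / 2) (hN : 0 ≤ N) (hNβ : 512 * (n + 2) < N * β)
    (ht : t ∈ Icc (-1 : ℝ) 0) (hxb : ‖xb‖ ≤ 9 / 16) (hyb : yb ≤ 1 / 2) (hyb' : 0 ≤ yb')
    (hyy : yb' ≤ yb)
    (hH : ∀ x, ‖x - xb‖ ≤ 1 / 16 → ∀ y ∈ Icc (0 : ℝ) (9 / 16),
      u t (x, y) - u t (x, 0) ≤ N * y ^ β) :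
    u t (xb, yb) - u t (xb, yb') ≤ N * (yb - yb') ^ β := by
  by_contra! hlt
  obtain ⟨x, y, y', hxy, hxy', hyy', hy, hmax⟩ :=
    h.exists_isLocalMax_verticalDefect hβ hN ht hxb hyb hyb' hyy hH
      (by simpa [verticalDefect, verticalPenalty] using hlt)
  have hz : 0 < y - y' := sub_pos.2 hyy'
  have hint := vertical_doubling_interior (by linarith) (by linarith) (by norm_num)
    (h.isAHarmonicOn t ht) (hyb'.trans hyy) hxy hxy' hyy'
    ((hasSecondDerivAt_rpow β hz).const_mul N) (by positivity) hmax
  have hone : 1 ≤ (y - y') ^ (β - 2) := Real.one_le_rpow_of_pos_of_le_one_of_nonpos hz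
    (by linarith [show 0 < y' from hxy'.2]) (by linarith)
  have hconcave : N * β * (1 / 2 * 1) ≤ N * β * ((1 - β) * (y - y') ^ (β - 2)) := by
    gcongr <;> linarith
  linarith

end IsNormalizedSolution

/-! ### Combination of the increments -/

lemma exists_horizontal_parameters (n : ℕ) {s M : ℝ} (hs : 0 < s) (hs' : s ≤ 1 / 2)
    (hM : 0 ≤ M) :
    ∃ α N : ℝ, (0 < α ∧ α ≤ 1 / 4 ∧ α ≤ 2 * s ∧ 5 * α * M ≤ s) ∧
      0 ≤ N ∧ 512 * (4 * n + 4) < N * α ∧ 2 + 512 * (M / 4 + 1) < s * N / 2 := by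
  have hα : 0 < s / (5 * M + 4) := by positivity
  refine ⟨s / (5 * M + 4),
    512 * (4 * n + 5) / (s / (5 * M + 4)) + 2 * (3 + 512 * (M / 4 + 1)) / s, ⟨hα, ?_, ?_, ?_⟩,
    by positivity, ?_, ?_⟩
  · rw [div_le_iff₀ (by positivity)]
    linarith
  · rw [div_le_iff₀ (by positivity)]
    nlinarith [mul_nonneg hs.le hM]
  · rw [mul_div_assoc', div_mul_eq_mul_div, div_le_iff₀ (by positivity)]
    nlinarith
  · rw [add_mul, div_mul_cancel₀ _ hα.ne']
    have : 0 ≤ 2 * (3 + 512 * (M / 4 + 1)) / s * (s / (5 * M + 4)) := by positivity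
    linarith
  · rw [mul_comm s, add_mul, div_mul_cancel₀ _ hs.ne']
    have : 0 ≤ 512 * (4 * n + 5) / (s / (5 * M + 4)) * s := by positivity
    linarith

lemma le_mul_rpow_of_le_two {A C r β : ℝ} (hA : A ≤ 2) (hC : 32 ≤ C) (hr : 1 / 16 ≤ r)
    (hβ : 0 ≤ β) (hβ' : β ≤ 1) : A ≤ C * r ^ β := by
  calc A ≤ 32 * (1 / 16) := by linarith
    _ = 32 * (1 / 16) ^ (1 : ℝ) := by rw [Real.rpow_one]
    _ ≤ 32 * (1 / 16) ^ β := by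
      gcongr 32 * ?_
      exact Real.rpow_le_rpow_of_exponent_ge (by norm_num) (by norm_num) hβ'
    _ ≤ C * r ^ β := by gcongr

/-- Hölder estimate for horizontal increments of size at most `1 / 16`. -/
def HasHorizontalHolderBound {n : ℕ} (C α : ℝ) (u : ℝ → En n × ℝ → ℝ) : Prop :=
  ∀ t ∈ Icc (-1 / 2 : ℝ) 0, ∀ y ∈ Icc (0 : ℝ) (1 / 2), ∀ x x' : En n, ‖x'‖ ≤ 9 / 16 →
    ‖x - x'‖ ≤ 1 / 16 → |u t (x, y) - u t (x', y)| ≤ C * ‖x - x'‖ ^ α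

lemma HasHorizontalHolderBound.neg {n : ℕ} {C α : ℝ} {u : ℝ → En n × ℝ → ℝ}
    (h : HasHorizontalHolderBound C α u) : HasHorizontalHolderBound C α (fun t p => -u t p) := by
  intro t ht y hy x x' hx' hxx
  rw [neg_sub_neg, abs_sub_comm]
  exact h t ht y hy x x' hx' hxx

lemma exists_hasHorizontalHolderBound (n : ℕ) {s M : ℝ} (hs : 0 < s) (hs' : s ≤ 1 / 2)
    (hM : 0 ≤ M) :
    ∃ α C : ℝ, 0 < α ∧ α ≤ 1 / 4 ∧ 0 ≤ C ∧ ∀ (b : ℝ → En n → En n) (u : ℝ → En n × ℝ → ℝ),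
      IsNormalizedSolution s M b u → HasHorizontalHolderBound C α u := by
  obtain ⟨α, N, ⟨hα, hα', hαs, hαM⟩, hN, hNα, hNs⟩ := exists_horizontal_parameters n hs hs' hM
  exact ⟨α, 5 * N + 512, hα, hα', by positivity, fun b u h t ht y hy x x' hx' hxx =>
    h.abs_horizontal_sub_le hs hs' hα hα' hαs hαM hN hNα hNs ht hx' hxx hy⟩

/-- Hölder estimate, with exponent `β` and constant `C`, for the increments of `u` in each of the
variables `x`, `y`, and, at `y = 0`, `t`. -/
structure HasHolderIncrements {n : ℕ} (C β : ℝ) (u : ℝ → En n × ℝ → ℝ) : Prop where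
  horizontal : ∀ t ∈ Icc (-1 / 2 : ℝ) 0, ∀ y ∈ Icc (0 : ℝ) (1 / 2), ∀ x x' : En n,
    ‖x‖ ≤ 1 / 2 → ‖x'‖ ≤ 1 / 2 → |u t (x, y) - u t (x', y)| ≤ C * ‖x - x'‖ ^ β
  time : ∀ t ∈ Icc (-1 / 2 : ℝ) 0, ∀ t' ∈ Icc (-1 / 2 : ℝ) 0, ∀ x : En n, ‖x‖ ≤ 1 / 2 →
    |u t (x, 0) - u t' (x, 0)| ≤ C * |t - t'| ^ β
  vertical : ∀ t ∈ Icc (-1 / 2 : ℝ) 0, ∀ y ∈ Icc (0 : ℝ) (1 / 2), ∀ y' ∈ Icc (0 : ℝ) (1 / 2),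
    ∀ x : En n, ‖x‖ ≤ 1 / 2 → |u t (x, y) - u t (x, y')| ≤ C * |y - y'| ^ β

namespace IsNormalizedSolution

variable {n : ℕ} {s M C₁ C α t t₁ t₂ : ℝ} {b : ℝ → En n → En n} {u : ℝ → En n × ℝ → ℝ}
  {x x' : En n}

lemma abs_horizontal_sub_le_of_hasHorizontalHolderBound {β y : ℝ}
    (h : IsNormalizedSolution s M b u) (hX : HasHorizontalHolderBound C₁ α u) (hβ : 0 ≤ β)
    (hβα : β ≤ α) (hα' : α ≤ 1) (hC : 32 ≤ C) (hC₁ : C₁ ≤ C) (ht : t ∈ Icc (-1 / 2 : ℝ) 0)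
    (hy : y ∈ Icc (0 : ℝ) (1 / 2)) (hx : ‖x‖ ≤ 1 / 2) (hx' : ‖x'‖ ≤ 1 / 2) :
    |u t (x, y) - u t (x', y)| ≤ C * ‖x - x'‖ ^ β := by
  obtain hxx | hxx := le_total ‖x - x'‖ (1 / 16)
  · refine (hX t ht y hy x x' (by linarith) hxx).trans ?_
    have := Real.rpow_le_rpow_of_exponent_ge' (norm_nonneg (x - x')) (by linarith) hβ hβα
    gcongr
  · have htI : t ∈ Icc (-1 : ℝ) 0 := ⟨by linarith [ht.1], ht.2⟩
    have hmem {z : En n} (hz : ‖z‖ ≤ 1 / 2) : (z, y) ∈ halfBallWithBase n 1 :=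
      mk_mem_halfBallWithBase_of_norm_sub_le (xb := z) (by linarith) (by simp) hy.1
        (by linarith [hy.2])
    exact le_mul_rpow_of_le_two (abs_sub_le_iff.2 ⟨h.sub_le_two htI htI (hmem hx) (hmem hx'),
      h.sub_le_two htI htI (hmem hx') (hmem hx)⟩) hC hxx hβ (hβα.trans hα')

lemma sub_base_le_of_hasHorizontalHolderBound {y : ℝ} (h : IsNormalizedSolution s M b u)
    (hX : HasHorizontalHolderBound C₁ α u) (hs : 0 < s) (hs' : s ≤ 1 / 2) (hα : 0 < α)
    (hα' : α ≤ 1 / 4) (hC₁ : 0 ≤ C₁) (hC : C₁ + (C₁ + 512) * (n + 3 + M) ≤ C)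
    (ht₁ : -1 / 2 ≤ t₁) (ht₂ : t₂ ≤ 0) (ht : t₁ ≤ t₂) (hx : ‖x‖ ≤ 9 / 16)
    (hy : y ∈ Icc (0 : ℝ) (1 / 16)) :
    u t₂ (x, y) - u t₁ (x, 0) ≤ C * (y ^ (2 * s) + (t₂ - t₁)) ^ (α / 4) := by
  refine (h.sub_base_le hs hs' hα (by linarith) hC₁ (by linarith) ht₂ ht hx hy fun z hz =>
    (le_abs_self _).trans (hX t₁ ⟨ht₁, ht.trans ht₂⟩ 0 (by simp) z x hx hz)).trans ?_
  gcongr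
  exact Real.rpow_nonneg (add_nonneg (Real.rpow_nonneg hy.1 _) (sub_nonneg.2 ht)) _

lemma time_sub_le (h : IsNormalizedSolution s M b u)
    (hX : HasHorizontalHolderBound C₁ α u) (hs : 0 < s) (hs' : s ≤ 1 / 2) (hα : 0 < α)
    (hα' : α ≤ 1 / 4) (hC₁ : 0 ≤ C₁) (hC : C₁ + (C₁ + 512) * (n + 3 + M) ≤ C)
    (ht₁ : -1 / 2 ≤ t₁) (ht₂ : t₂ ≤ 0) (ht : t₁ ≤ t₂) (hx : ‖x‖ ≤ 9 / 16) :
    u t₂ (x, 0) - u t₁ (x, 0) ≤ C * (t₂ - t₁) ^ (s * α / 2) := by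
  have hle := h.sub_base_le_of_hasHorizontalHolderBound hX hs hs' hα hα' hC₁ hC ht₁ ht₂ ht hx
    ⟨le_rfl, by norm_num⟩
  rw [Real.zero_rpow (by positivity), zero_add] at hle
  have hM := h.drift_bound_nonneg
  have hC₀ : 0 ≤ C := le_trans (by positivity) hC
  refine hle.trans (mul_le_mul_of_nonneg_left ?_ hC₀)
  exact Real.rpow_le_rpow_of_exponent_ge' (sub_nonneg.2 ht) (by linarith) (by positivity)
    (by nlinarith)

lemma vertical_sub_base_le {y : ℝ} (h : IsNormalizedSolution s M b u)
    (hX : HasHorizontalHolderBound C₁ α u) (hs : 0 < s) (hs' : s ≤ 1 / 2) (hα : 0 < α)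
    (hα' : α ≤ 1 / 4) (hC₁ : 0 ≤ C₁) (hC : C₁ + (C₁ + 512) * (n + 3 + M) ≤ C) (hC' : 32 ≤ C)
    (ht : t ∈ Icc (-1 / 2 : ℝ) 0) (hx : ‖x‖ ≤ 9 / 16) (hy : y ∈ Icc (0 : ℝ) (9 / 16)) :
    u t (x, y) - u t (x, 0) ≤ C * y ^ (s * α / 2) := by
  obtain hy' | hy' := le_total y (1 / 16)
  · have hle := h.sub_base_le_of_hasHorizontalHolderBound hX hs hs' hα hα' hC₁ hC ht.1 ht.2 le_rfl
      hx ⟨hy.1, hy'⟩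
    rwa [sub_self, add_zero, ← Real.rpow_mul hy.1,
      show 2 * s * (α / 4) = s * α / 2 by ring] at hle
  · have htI : t ∈ Icc (-1 : ℝ) 0 := ⟨by linarith [ht.1], ht.2⟩
    exact le_mul_rpow_of_le_two (h.sub_le_two htI htI
      (mk_mem_halfBallWithBase_of_norm_sub_le (xb := x) hx (by simp) hy.1 hy.2)
      (mk_mem_halfBallWithBase_of_norm_sub_le (xb := x) hx (by simp) le_rfl (by norm_num)))
      hC' hy' (by positivity) (by nlinarith)

lemma vertical_sub_le_of_hasHorizontalHolderBound {y y' : ℝ} (h : IsNormalizedSolution s M b u)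
    (hX : HasHorizontalHolderBound C₁ α u) (hs : 0 < s) (hs' : s ≤ 1 / 2) (hα : 0 < α)
    (hα' : α ≤ 1 / 4) (hC₁ : 0 ≤ C₁) (hC : C₁ + (C₁ + 512) * (n + 3 + M) ≤ C) (hC' : 32 ≤ C)
    (hCβ : 512 * (n + 2) < C * (s * α / 2)) (ht : t ∈ Icc (-1 / 2 : ℝ) 0) (hx : ‖x‖ ≤ 1 / 2)
    (hy' : 0 ≤ y') (hyy : y' ≤ y) (hy : y ≤ 1 / 2) :
    u t (x, y) - u t (x, y') ≤ C * (y - y') ^ (s * α / 2) := by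
  refine h.vertical_sub_le hs.le hs' (by positivity) (by nlinarith) (by linarith) hCβ
    ⟨by linarith [ht.1], ht.2⟩ (by linarith) hy hy' hyy fun z hz η hη => ?_
  exact h.vertical_sub_base_le hX hs hs' hα hα' hC₁ hC hC' ht
    (by linarith [norm_le_norm_add_norm_sub' z x]) hη

lemma hasHolderIncrements (h : IsNormalizedSolution s M b u)
    (hX : HasHorizontalHolderBound C₁ α u) (hs : 0 < s) (hs' : s ≤ 1 / 2) (hα : 0 < α)
    (hα' : α ≤ 1 / 4) (hC₁ : 0 ≤ C₁) (hC : C₁ + (C₁ + 512) * (n + 3 + M) ≤ C) (hC' : 32 ≤ C)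
    (hCβ : 512 * (n + 2) < C * (s * α / 2)) : HasHolderIncrements C (s * α / 2) u where
  horizontal t ht y hy x x' hx hx' := by
    have hM := h.drift_bound_nonneg
    have : 0 ≤ (C₁ + 512) * (n + 3 + M) := by positivity
    exact h.abs_horizontal_sub_le_of_hasHorizontalHolderBound hX (by positivity) (by nlinarith)
      (by linarith) hC' (by linarith) ht hy hx hx'
  time t ht t' ht' x hx := by
    wlog htt : t' ≤ t generalizing t t'
    · rw [abs_sub_comm, abs_sub_comm t]
      exact this t' ht' t ht (le_of_not_ge htt)
    rw [abs_of_nonneg (sub_nonneg.2 htt), abs_sub_le_iff, ← neg_sub_neg (u t _)]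
    have hx' : ‖x‖ ≤ 9 / 16 := by linarith
    exact ⟨h.time_sub_le hX hs hs' hα hα' hC₁ hC ht'.1 ht.2 htt hx',
      h.neg.time_sub_le hX.neg hs hs' hα hα' hC₁ hC ht'.1 ht.2 htt hx'⟩
  vertical t ht y hy y' hy' x hx := by
    wlog hyy : y' ≤ y generalizing y y'
    · rw [abs_sub_comm, abs_sub_comm y]
      exact this y' hy' y hy (le_of_not_ge hyy)
    rw [abs_of_nonneg (sub_nonneg.2 hyy), abs_sub_le_iff, ← neg_sub_neg (u t (x, y))]
    exact ⟨h.vertical_sub_le_of_hasHorizontalHolderBound hX hs hs' hα hα' hC₁ hC hC' hCβ ht hx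
        hy'.1 hyy hy.2,
      h.neg.vertical_sub_le_of_hasHorizontalHolderBound hX.neg hs hs' hα hα' hC₁ hC hC' hCβ ht hx
        hy'.1 hyy hy.2⟩

end IsNormalizedSolution

lemma exists_hasHolderIncrements (n : ℕ) {s M : ℝ} (hs : 0 < s) (hs' : s ≤ 1 / 2) (hM : 0 ≤ M) :
    ∃ β ∈ Ioo (0 : ℝ) 1, ∃ C > 1, ∀ (b : ℝ → En n → En n) (u : ℝ → En n × ℝ → ℝ),
      IsNormalizedSolution s M b u → HasHolderIncrements C β u := by
  obtain ⟨α, C₁, hα, hα', hC₁, hX⟩ := exists_hasHorizontalHolderBound n hs hs' hM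
  have hβ : 0 < s * α / 2 := by positivity
  have hC₂ : 0 ≤ C₁ + (C₁ + 512) * (n + 3 + M) := by positivity
  have hdiv : 0 ≤ 512 * ((n : ℝ) + 3) / (s * α / 2) := by positivity
  refine ⟨s * α / 2, ⟨hβ, by nlinarith⟩,
    C₁ + (C₁ + 512) * (n + 3 + M) + 32 + 512 * (n + 3) / (s * α / 2), by linarith, fun b u h =>
    h.hasHolderIncrements (hX b u h) hs hs' hα hα' hC₁ (by linarith) (by linarith) ?_⟩
  rw [add_mul, div_mul_cancel₀ _ hβ.ne']
  nlinarith

lemma norm_fst_le_and_snd_mem_of_mem_halfBall {n : ℕ} {r : ℝ} (hr : 0 ≤ r) {p : En n × ℝ}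
    (hp : p ∈ halfBall n r) : ‖p.1‖ ≤ r ∧ p.2 ∈ Icc 0 r :=
  ⟨(abs_le_of_sq_le_sq' (by nlinarith [hp.1, sq_nonneg p.2]) hr).2, hp.2.le,
    (abs_le_of_sq_le_sq' (by nlinarith [hp.1, sq_nonneg ‖p.1‖]) hr).2⟩

lemma ge_of_forall_gt_of_continuous {A W : ℝ} {g : ℝ → ℝ} (hg : Continuous g)
    (h : ∀ V > W, A ≤ g V) : A ≤ g W :=
  ge_of_tendsto (hg.continuousWithinAt (s := Ioi W)) (eventually_mem_nhdsWithin.mono h)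

namespace HasHolderIncrements

variable {n : ℕ} {β C V W : ℝ} {u : ℝ → En n × ℝ → ℝ}

lemma of_inv_mul (hV : 0 < V) (h : HasHolderIncrements C β (fun t p => V⁻¹ * u t p)) :
    HasHolderIncrements (C * V) β u := by
  have hscale {A B r : ℝ} (hAB : |V⁻¹ * A - V⁻¹ * B| ≤ C * r) : |A - B| ≤ C * V * r := by
    rw [← mul_sub, abs_mul, abs_of_pos (inv_pos.2 hV), inv_mul_le_iff₀ hV] at hAB
    linarith
  exact ⟨fun t ht y hy x x' hx hx' => hscale (h.horizontal t ht y hy x x' hx hx'),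
    fun t ht t' ht' x hx => hscale (h.time t ht t' ht' x hx),
    fun t ht y hy y' hy' x hx => hscale (h.vertical t ht y hy y' hy' x hx)⟩

lemma of_forall_gt (h : ∀ V > W, HasHolderIncrements (C * V) β u) :
    HasHolderIncrements (C * W) β u := by
  have hlim {A r : ℝ} (hA : ∀ V > W, A ≤ C * V * r) : A ≤ C * W * r :=
    ge_of_forall_gt_of_continuous (g := fun V => C * V * r) (by fun_prop) hA
  exact ⟨fun t ht y hy x x' hx hx' =>
      hlim fun V hV => (h V hV).horizontal t ht y hy x x' hx hx',
    fun t ht t' ht' x hx => hlim fun V hV => (h V hV).time t ht t' ht' x hx,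
    fun t ht y hy y' hy' x hx => hlim fun V hV => (h V hV).vertical t ht y hy y' hy' x hx⟩

lemma abs_base_sub_le (h : HasHolderIncrements C β u) (hC : 0 ≤ C) (hβ : 0 ≤ β) {t t' : ℝ}
    {x x' : En n} (ht : t ∈ Icc (-1 / 2 : ℝ) 0) (ht' : t' ∈ Icc (-1 / 2 : ℝ) 0)
    (hx : ‖x‖ ≤ 1 / 2) (hx' : ‖x'‖ ≤ 1 / 2) :
    |u t (x, 0) - u t' (x', 0)| ≤ 2 * C * (|t - t'| + ‖x - x'‖) ^ β :=
  calc |u t (x, 0) - u t' (x', 0)|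
      ≤ |u t (x, 0) - u t (x', 0)| + |u t (x', 0) - u t' (x', 0)| := abs_sub_le _ _ _
    _ ≤ C * ‖x - x'‖ ^ β + C * |t - t'| ^ β := by
      gcongr
      · exact h.horizontal t ht 0 (by norm_num) x x' hx hx'
      · exact h.time t ht t' ht' x' hx'
    _ ≤ C * (|t - t'| + ‖x - x'‖) ^ β + C * (|t - t'| + ‖x - x'‖) ^ β := by
      gcongr
      · exact le_add_of_nonneg_left (abs_nonneg _)
      · exact le_add_of_nonneg_right (norm_nonneg _)
    _ = 2 * C * (|t - t'| + ‖x - x'‖) ^ β := by ring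

lemma abs_sub_le_of_mem_halfBall (h : HasHolderIncrements C β u) (hC : 0 ≤ C) (hβ : 0 ≤ β)
    {t : ℝ} {p q : En n × ℝ} (ht : t ∈ Icc (-1 / 2 : ℝ) 0) (hp : p ∈ halfBall n (1 / 2))
    (hq : q ∈ halfBall n (1 / 2)) : |u t p - u t q| ≤ 2 * C * ‖p - q‖ ^ β := by
  obtain ⟨hp₁, hp₂⟩ := norm_fst_le_and_snd_mem_of_mem_halfBall (by norm_num) hp
  obtain ⟨hq₁, hq₂⟩ := norm_fst_le_and_snd_mem_of_mem_halfBall (by norm_num) hq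
  calc |u t p - u t q|
      ≤ |u t (p.1, p.2) - u t (q.1, p.2)| + |u t (q.1, p.2) - u t (q.1, q.2)| :=
        abs_sub_le _ _ _
    _ ≤ C * ‖(p - q).1‖ ^ β + C * |(p - q).2| ^ β := by
      gcongr
      · exact h.horizontal t ht p.2 hp₂ p.1 q.1 hp₁ hq₁
      · exact h.vertical t ht p.2 hp₂ q.2 hq₂ q.1 hq₁
    _ ≤ C * ‖p - q‖ ^ β + C * ‖p - q‖ ^ β := by
      gcongr
      · exact norm_fst_le _
      · exact norm_snd_le (p - q)
    _ = 2 * C * ‖p - q‖ ^ β := by ring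

end HasHolderIncrements

/-! ### The Hölder estimate -/

lemma exists_hasHolderIncrements_of_isExtDDSolution (n : ℕ) {s M : ℝ} (hs : 0 < s)
    (hs' : s ≤ 1 / 2) (hM : 0 ≤ M) :
    ∃ β ∈ Ioo (0 : ℝ) 1, ∃ C > 1,
      ∀ (b : ℝ → En n → En n) (f : ℝ → En n → ℝ) (u : ℝ → En n × ℝ → ℝ) (W : ℝ), 0 ≤ W →
      (∀ t ∈ Icc (-1 : ℝ) 0, (∀ x ∈ flatBall n 1, ‖b t x‖ ≤ M) ∧
        ∀ x ∈ flatBall n 1, ∀ x' ∈ flatBall n 1,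
          ‖b t x - b t x'‖ ≤ M * ‖x - x'‖ ^ (1 - 2 * s)) →
      (∀ t ∈ Icc (-1 : ℝ) 0, ∀ x ∈ flatBall n 1, |f t x| ≤ W) →
      IsExtDDSolution (1 - 2 * s) b f u →
      (∀ t ∈ Icc (-1 : ℝ) 0, ∀ p ∈ halfBall n 1, |u t p| ≤ W) →
      HasHolderIncrements (C * W) β u := by
  obtain ⟨β, hβ, C, hC, hincr⟩ := exists_hasHolderIncrements n hs hs' hM
  refine ⟨β, hβ, C, hC, fun b f u W hW hb hf hu huW => .of_forall_gt fun V hV => ?_⟩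
  have hV₀ : 0 < V := hW.trans_lt hV
  exact .of_inv_mul hV₀ <| hincr b _ <| .of_isExtDDSolution hV₀ hb
    (fun t ht x hx => (hf t ht x hx).trans hV.le) hu
    fun t ht p hp => (huW t ht p hp).trans hV.le

/-- The endpoint `s = 1 / 2` of the range is the critical case: the extension is harmonic and the
drift is merely bounded. -/
theorem holder_estimate_with_drift_general (n : ℕ) (s : ℝ) (hs : s ∈ Ioc (0 : ℝ) (1 / 2))
    (M : ℝ) (hM : 0 ≤ M) :
    ∃ α ∈ Ioo (0 : ℝ) 1, ∃ C > 0,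
      ∀ (b : ℝ → En n → En n) (f : ℝ → En n → ℝ) (u : ℝ → En n × ℝ → ℝ) (U0 F : ℝ),
      0 ≤ U0 → 0 ≤ F →
      (∀ t ∈ Icc (-1 : ℝ) 0, (∀ x ∈ flatBall n 1, ‖b t x‖ ≤ M) ∧
        ∀ x ∈ flatBall n 1, ∀ x' ∈ flatBall n 1,
          ‖b t x - b t x'‖ ≤ M * ‖x - x'‖ ^ (1 - 2 * s)) →
      (∀ t ∈ Icc (-1 : ℝ) 0, ∀ x ∈ flatBall n 1, |f t x| ≤ F) →
      IsExtDDSolution (1 - 2 * s) b f u →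
      (∀ t ∈ Icc (-1 : ℝ) 0, ∀ p ∈ halfBall n 1, |u t p| ≤ U0) →
      (∀ t ∈ Icc (-1 / 2 : ℝ) 0, ∀ x ∈ flatBall n (1 / 2), |u t (x, 0)| ≤ C * (U0 + F)) ∧
      (∀ t ∈ Icc (-1 / 2 : ℝ) 0, ∀ t' ∈ Icc (-1 / 2 : ℝ) 0,
        ∀ x ∈ flatBall n (1 / 2), ∀ x' ∈ flatBall n (1 / 2),
          |u t (x, 0) - u t' (x', 0)| ≤ C * (U0 + F) * (|t - t'| + ‖x - x'‖) ^ α) ∧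
      (∀ t ∈ Icc (-1 / 2 : ℝ) 0, ∀ p ∈ halfBall n (1 / 2), ∀ q ∈ halfBall n (1 / 2),
          |u t p - u t q| ≤ C * (U0 + F) * ‖p - q‖ ^ α) := by
  obtain ⟨β, hβ, C, hC, hholder⟩ :=
    exists_hasHolderIncrements_of_isExtDDSolution n hs.1 hs.2 hM
  refine ⟨β, hβ, 2 * C, by linarith, fun b f u U F hU hF hb hf hu huU => ?_⟩
  have hincr : HasHolderIncrements (C * (U + F)) β u := hholder b f u (U + F) (by positivity) hb
    (fun t ht x hx => (hf t ht x hx).trans (by linarith)) hu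
    fun t ht p hp => (huU t ht p hp).trans (by linarith)
  have hCUF : 0 ≤ C * (U + F) := by positivity
  rw [mul_assoc]
  refine ⟨fun t ht x hx => ?_, fun t ht t' ht' x hx x' hx' =>
    hincr.abs_base_sub_le hCUF hβ.1.le ht ht' hx.le hx'.le, fun t ht p hp q hq =>
    hincr.abs_sub_le_of_mem_halfBall hCUF hβ.1.le ht hp hq⟩
  have hx₁ : x ∈ flatBall n 1 := (show ‖x‖ < 1 / 2 from hx).trans (by norm_num)
  have := hu.abs_le_on_halfBallWithBase huU t ⟨by linarith [ht.1], ht.2⟩ (x, 0)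
    (mk_zero_mem_halfBallWithBase hx₁)
  nlinarith

/-- **Hölder estimate** (Proposition 5.1, localized version of Silvestre's Hölder estimate):
for `b ∈ L^∞ C^{1-2s}` and bounded `f`, bounded solutions are `C^α` in `[-1/2,0] × B_{1/2}^0`
and in `{t} × B_{1/2}^+` for each `t`, with exponent and constant depending only on `s`, `n`
and `M`. -/
theorem holder_estimate_with_drift (n : ℕ) (hn : 1 ≤ n) (s : ℝ) (hs : s ∈ Ioo (0 : ℝ) (1/2))
    (M : ℝ) (hM : 0 ≤ M) :
    ∃ α ∈ Ioo (0 : ℝ) 1, ∃ C > 0,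
      ∀ (b : ℝ → En n → En n) (f : ℝ → En n → ℝ) (u : ℝ → En n × ℝ → ℝ) (U0 F : ℝ),
      0 ≤ U0 → 0 ≤ F →
      (∀ t ∈ Icc (-1 : ℝ) 0, (∀ x ∈ flatBall n 1, ‖b t x‖ ≤ M) ∧
        ∀ x ∈ flatBall n 1, ∀ x' ∈ flatBall n 1,
          ‖b t x - b t x'‖ ≤ M * ‖x - x'‖ ^ (1 - 2*s)) →
      (∀ t ∈ Icc (-1 : ℝ) 0, ∀ x ∈ flatBall n 1, |f t x| ≤ F) →
      IsExtDDSolution (1 - 2*s) b f u →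
      (∀ t ∈ Icc (-1 : ℝ) 0, ∀ p ∈ halfBall n 1, |u t p| ≤ U0) →
      (∀ t ∈ Icc (-(1:ℝ)/2) 0, ∀ x ∈ flatBall n (1/2), |u t (x, 0)| ≤ C * (U0 + F)) ∧
      (∀ t ∈ Icc (-(1:ℝ)/2) 0, ∀ t' ∈ Icc (-(1:ℝ)/2) 0,
        ∀ x ∈ flatBall n (1/2), ∀ x' ∈ flatBall n (1/2),
          |u t (x, 0) - u t' (x', 0)| ≤ C * (U0 + F) * (|t - t'| + ‖x - x'‖) ^ α) ∧
      (∀ t ∈ Icc (-(1:ℝ)/2) 0, ∀ p ∈ halfBall n (1/2), ∀ q ∈ halfBall n (1/2),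
          |u t p - u t q| ≤ C * (U0 + F) * ‖p - q‖ ^ α) := by
  exact holder_estimate_with_drift_general n s ⟨hs.1, hs.2.le⟩ M hM

end
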